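/- arXiv:1808.06557 — 2 statements merged into one kernel-verified Lean document; each statement's English description precedes it below -/
import Mathlib

section
/- (Scott–Styer) Let b and c be distinct odd primes and let k be a fixed positive integer. Then the equation c^z − b^y = 2^k has at most one solution (y,z) in positive integers. -/
/-!
Write `2 ^ k = A X ^ 2` with `A ∈ {1, 2}` and `X` a power of `2`. A solution is then a
representation of a power of `c` by a binary quadratic form of determinant `A b` (for `y` odd) or
`A` (for `y` even), that is, an element of a quadratic ring whose norm is a power of `c`.

*Both `y` odd.* Let `m₀` be least such that `A u ^ 2 + b v ^ 2 = c ^ m₀` has a solution with `v` odd.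
By `descent`, every solution of `A X ^ 2 + b Y ^ 2 = c ^ z` comes from an odd power of
`u₀ √A + v₀ √(-b)`; `lehmer` gives the coefficients of such powers. For a power of `2` as
`A X ^ 2` and a power of `b` as `Y`, the real coefficient has to be `± 1`, and after reduction to a
prime exponent (`reduce_to_prime`) this is impossible by a congruence argument at `b`
(`lehmer_prime`). Hence `z = m₀` is determined (`exponent_minimal`).

*Both `y` even.* If `z` is even one factors a difference of squares (`even_y_even_z`). If `z` is
odd the same descent applies, where `c` itself is represented by Thue's lemma; the remaining case
`y = ± 1` in `(√(-a) + 1) ^ t`, with `a = 2 ^ k`, is excluded by comparing `2`-adic valuations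
(`thetaPow_im_ne`). The outcome is `z = 1` up to four explicit equations (`even_y_cases`), which
gives uniqueness.

*One `y` of each parity.* Outside the four explicit equations, `c = b ^ (2 * j) + 2 ^ k` and
`c ^ z = b ^ y + 2 ^ k` with `y` odd. Congruences give `2 ^ k ∣ b - 1` (`two_pow_dvd`), so `c` is so
close to a power of `b` that `z` must exceed roughly `log b * b ^ 2 / 2 ^ k` (`large_exponent`). On
the other hand, attach to every `i ≤ z` a shortest vector of a lattice of index `c ^ i`: the form
`x ^ 2 + A b y ^ 2` has the value `m * c ^ i` there, with `m ≤ 2 √(A b)`. Two exponents with the same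
`m` and the same root of `-A b` modulo `m` yield a representation of a smaller power of `c`, which
contradicts the minimality of `z`. Counting the possible pairs bounds `z` (`exponent_bound`), and
the two bounds are incompatible for `b ≥ 17`; smaller `b` fall to congruences.
-/

/-! ### Odd powers of binomials in square roots -/

/-- The coefficients `(P, Q)` of an odd power: if `x ^ 2 = a` and `y ^ 2 = -d`, then
`(x + y) ^ (2 * s + 1) = P * x + Q * y`. -/
def lehmer (a d : ℤ) : ℕ → ℤ × ℤ
  | 0 => (1, 1)
  | s + 1 => ((a - d) * (lehmer a d s).1 - 2 * d * (lehmer a d s).2,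
      (a - d) * (lehmer a d s).2 + 2 * a * (lehmer a d s).1)

lemma lehmer_norm (a d : ℤ) (s : ℕ) :
    a * (lehmer a d s).1 ^ 2 + d * (lehmer a d s).2 ^ 2 = (a + d) ^ (2 * s + 1) := by
  induction s with
  | zero => simp [lehmer]
  | succ s ih =>
    have : (a + d) ^ (2 * (s + 1) + 1) = (a + d) ^ (2 * s + 1) * (a + d) ^ 2 := by ring
    rw [this, ← ih]
    simp only [lehmer]
    ring

lemma lehmer_fst_odd {a d : ℤ} (ha : Even a) (hd : Odd d) (s : ℕ) : Odd (lehmer a d s).1 := by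
  induction s with
  | zero => simp [lehmer]
  | succ s ih =>
    simp only [lehmer]
    exact ((ha.sub_odd hd).mul ih).sub_even ((even_two.mul_right d).mul_right _)

lemma lehmer_mod_fst (a d : ℤ) (s : ℕ) : d ∣ (lehmer a d s).1 - a ^ s := by
  induction s with
  | zero => simp [lehmer]
  | succ s ih =>
    obtain ⟨x, hx⟩ := ih
    refine ⟨(a - d) * x - a ^ s - 2 * (lehmer a d s).2, ?_⟩
    simp only [lehmer]
    linear_combination (a - d) * hx

lemma lehmer_mod_snd (a d : ℤ) (s : ℕ) : d ∣ (lehmer a d s).2 - (2 * s + 1) * a ^ s := by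
  induction s with
  | zero => simp [lehmer]
  | succ s ih =>
    obtain ⟨x, hx⟩ := ih
    obtain ⟨y, hy⟩ := lehmer_mod_fst a d s
    refine ⟨(a - d) * x - (2 * s + 1) * a ^ s + 2 * a * y, ?_⟩
    simp only [lehmer]
    push_cast
    linear_combination (a - d) * hx + 2 * a * hy

/-- The first two terms of the binomial expansion of `P` in powers of `d`, multiplied by `a`. -/
lemma lehmer_mod_sq_fst (a d : ℤ) (s : ℕ) :
    d ^ 2 ∣ a * (lehmer a d s).1 - (a ^ (s + 1) - s * (2 * s + 1) * a ^ s * d) := by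
  induction s with
  | zero => simp [lehmer]
  | succ s ih =>
    obtain ⟨x, hx⟩ := ih
    obtain ⟨y, hy⟩ := lehmer_mod_snd a d s
    refine ⟨s * (2 * s + 1) * a ^ s + (a - d) * x - 2 * a * y, ?_⟩
    simp only [lehmer]
    push_cast
    linear_combination (a - d) * hx - 2 * d * a * hy

/-- The first two terms of the binomial expansion of `Q` in powers of `d`, multiplied by `3 * a`. -/
lemma lehmer_mod_sq_snd (a d : ℤ) (s : ℕ) :
    d ^ 2 ∣ 3 * a * (lehmer a d s).2 -
      (3 * (2 * s + 1) * a ^ (s + 1) - (2 * s + 1) * s * (2 * s - 1) * a ^ s * d) := by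
  induction s with
  | zero => simp [lehmer]
  | succ s ih =>
    obtain ⟨x, hx⟩ := ih
    obtain ⟨y, hy⟩ := lehmer_mod_sq_fst a d s
    refine ⟨(2 * s + 1) * s * (2 * s - 1) * a ^ s + (a - d) * x + 6 * a * y, ?_⟩
    simp only [lehmer]
    push_cast
    linear_combination (a - d) * hx + 6 * a * hy

/-- No power of prime index `2 * s + 1` has `P = ±1` and `Q` a power of `b` when `b ∣ d`: the
exponent of `b` in `Q` is at most one, so the norm would be too small. -/
lemma lehmer_prime {b k s : ℕ} {d : ℤ} (hb : b.Prime) (hbodd : Odd b) (hp : (2 * s + 1).Prime)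
    (hd : 0 < d) (hbd : (b : ℤ) ∣ d) (h3 : b = 3 → d = 3 ∨ 9 ∣ d)
    (hP : |(lehmer (2 ^ k) d s).1| = 1) (hQ : ∃ f : ℕ, |(lehmer (2 ^ k) d s).2| = (b : ℤ) ^ f) :
    False := by
  have hs : 1 ≤ s := by
    rcases Nat.eq_zero_or_pos s with rfl | h
    · exact absurd hp (by norm_num)
    · exact h
  have hbZ : Prime (b : ℤ) := Nat.prime_iff_prime_int.mp hb
  have hb2 : b ≠ 2 := by rintro rfl; exact absurd hbodd (by decide)
  have hb3 : 3 ≤ b := by have := hb.two_le; omega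
  have hba : ∀ n : ℕ, ¬ (b : ℤ) ∣ (2 ^ k) ^ n := by
    intro n h
    have h := hbZ.dvd_of_dvd_pow (hbZ.dvd_of_dvd_pow h)
    have h : b ∣ 2 := by exact_mod_cast h
    have := Nat.le_of_dvd (by norm_num) h
    omega
  obtain ⟨f, hf⟩ := hQ
  have hnorm := lehmer_norm (2 ^ k) d s
  have hP2 : (lehmer (2 ^ k) d s).1 ^ 2 = 1 := by rw [← sq_abs, hP]; norm_num
  have hQ2 : (lehmer (2 ^ k) d s).2 ^ 2 = ((b : ℤ) ^ f) ^ 2 := by rw [← sq_abs, hf]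
  rw [hP2, hQ2] at hnorm
  have ha : (1 : ℤ) ≤ 2 ^ k := one_le_pow₀ (by norm_num)
  have hbd' : (b : ℤ) ≤ d := Int.le_of_dvd hd hbd
  have hb3' : (3 : ℤ) ≤ b := by exact_mod_cast hb3
  have hn : (4 : ℤ) ≤ 2 ^ k + d := by linarith
  have hpow3 : (2 ^ k + d) ^ 3 ≤ (2 ^ k + d) ^ (2 * s + 1) :=
    pow_le_pow_right₀ (by linarith) (by omega)
  have hf0 : f ≠ 0 := by
    rintro rfl
    have h1 : (2 ^ k + d) ^ 3 ≤ 2 ^ k + d := by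
      rw [← hnorm] at hpow3
      linarith
    nlinarith [mul_self_nonneg (2 ^ k + d)]
  have hbQ : (b : ℤ) ∣ (lehmer (2 ^ k) d s).2 := by
    rw [← dvd_abs, hf]; exact dvd_pow_self _ hf0
  have hbp : b = 2 * s + 1 := by
    have h1 := (dvd_sub_right hbQ).mp (hbd.trans (lehmer_mod_snd (2 ^ k) d s))
    rcases hbZ.dvd_or_dvd h1 with h | h
    · exact (Nat.prime_dvd_prime_iff_eq hb hp).mp (by exact_mod_cast h)
    · exact absurd h (hba s)
  have hsmall : ¬ (b : ℤ) ^ 2 ∣ (lehmer (2 ^ k) d s).2 → f = 1 := by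
    intro h
    by_contra hne
    exact h (by rw [← dvd_abs, hf]; exact pow_dvd_pow _ (by omega))
  by_cases hb5 : 5 ≤ b
  · have hf1 : f = 1 := by
      apply hsmall
      intro h
      have h1 : (b : ℤ) ^ 2 ∣ 3 * (2 ^ k) * (lehmer (2 ^ k) d s).2 := h.mul_left _
      have h2 := (dvd_sub_right h1).mp ((pow_dvd_pow_of_dvd hbd 2).trans
        (lehmer_mod_sq_snd (2 ^ k) d s))
      have h3 : (b : ℤ) ^ 2 ∣ (2 * s + 1) * s * (2 * s - 1) * (2 ^ k) ^ s * d := by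
        rw [sq]
        refine mul_dvd_mul ?_ hbd
        have : (b : ℤ) = 2 * s + 1 := by exact_mod_cast hbp
        rw [this]
        exact ((dvd_refl _).mul_right _ |>.mul_right _).mul_right _
      have h4 := (dvd_sub_left h3).mp h2
      have hbs : (2 * s + 1 : ℤ) = b := by rw [hbp]; push_cast; ring
      rw [hbs, sq, show 3 * (b : ℤ) * (2 ^ k) ^ (s + 1) = b * (3 * (2 ^ k) ^ (s + 1)) by ring] at h4
      have h5 := Int.dvd_of_mul_dvd_mul_left (by linarith) h4
      rcases hbZ.dvd_or_dvd h5 with h | h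
      · have := Int.le_of_dvd (by norm_num) h
        omega
      · exact hba _ h
    rw [hf1] at hnorm
    have hpow5 : (2 ^ k + d) ^ 5 ≤ (2 ^ k + d) ^ (2 * s + 1) :=
      pow_le_pow_right₀ (by linarith) (by omega)
    have h1 : (2 ^ k) * 1 + d * ((b : ℤ) ^ 1) ^ 2 ≤ (2 ^ k + d) * (2 ^ k + d) ^ 2 := by
      have : (b : ℤ) ^ 2 ≤ (2 ^ k + d) ^ 2 := by gcongr; linarith
      have h1 : (1 : ℤ) ≤ (2 ^ k + d) ^ 2 := by nlinarith
      rw [pow_one, add_mul]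
      gcongr
    have h2 : (2 ^ k + d) * (2 ^ k + d) ^ 2 < (2 ^ k + d) ^ 5 := by
      have : (2 ^ k + d) * (2 ^ k + d) ^ 2 = (2 ^ k + d) ^ 3 := by ring
      rw [this]
      exact pow_lt_pow_right₀ (by linarith) (by norm_num)
    linarith
  · have hb_eq : b = 3 := by
      rcases hbodd with ⟨r, rfl⟩
      omega
    have hs1 : s = 1 := by omega
    subst hs1
    subst hb_eq
    simp only [lehmer] at hP hf hsmall
    rcases h3 rfl with h | h
    · subst h
      have h8 : (2 : ℤ) ^ k = 8 ∨ (2 : ℤ) ^ k = 10 := by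
        rcases (abs_eq (by norm_num)).mp hP with h | h
        · right; linarith
        · left; linarith
      rcases h8 with h | h
      · rw [h] at hf
        norm_num at hf
        have : (7 : ℕ) ∣ 3 ^ f := ⟨3, by exact_mod_cast hf.symm⟩
        exact absurd (Nat.Prime.dvd_of_dvd_pow (by norm_num) this) (by norm_num)
      · have : (5 : ℕ) ∣ 2 ^ k := ⟨2, by exact_mod_cast h⟩
        exact absurd (Nat.Prime.dvd_of_dvd_pow (by norm_num) this) (by norm_num)
    · have hf1 : f = 1 := by
        apply hsmall
        intro h9
        have h3a : (3 : ℤ) ∣ (2 ^ k) ^ 1 := by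
          norm_num at h9
          norm_num
          omega
        exact hba 1 h3a
      rw [hf1] at hnorm
      have hd9 : 9 ≤ d := Int.le_of_dvd hd h
      norm_num at hnorm
      nlinarith [sq_nonneg (2 ^ k + d), mul_self_nonneg (2 ^ k + d)]

/-! ### Composition and descent -/

lemma lehmer_complex (a d : ℤ) (x y : ℝ) (hx : x ^ 2 = a) (hy : y ^ 2 = d) (s : ℕ) :
    ((x : ℂ) + y * Complex.I) ^ (2 * s + 1) =
      ((x * (lehmer a d s).1 : ℝ) : ℂ) + ((y * (lehmer a d s).2 : ℝ) : ℂ) * Complex.I := by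
  have hx' : (x : ℂ) ^ 2 = a := by exact_mod_cast congrArg (fun r : ℝ => (r : ℂ)) hx
  have hy' : (y : ℂ) ^ 2 = d := by exact_mod_cast congrArg (fun r : ℝ => (r : ℂ)) hy
  induction s with
  | zero => simp [lehmer]
  | succ s ih =>
    have : ((x : ℂ) + y * Complex.I) ^ (2 * (s + 1) + 1) =
      ((x : ℂ) + y * Complex.I) ^ (2 * s + 1) * ((x : ℂ) + y * Complex.I) ^ 2 := by ring
    rw [this, ih]
    simp only [lehmer]
    push_cast
    rw [← hx', ← hy']
    have hI : Complex.I ^ 2 = -1 := Complex.I_sq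
    have hI3 : Complex.I ^ 3 = -Complex.I := by rw [pow_succ, hI]; ring
    ring_nf
    rw [hI, hI3]
    ring

/-- Taking the power of index `2 * s + 1 = (2 * s₁ + 1) * (2 * s₂ + 1)` in two stages. -/
lemma lehmer_comp {a d : ℤ} (ha : 0 < a) (hd : 0 < d) {s s₁ s₂ : ℕ}
    (h : 2 * s + 1 = (2 * s₁ + 1) * (2 * s₂ + 1)) :
    (lehmer a d s).1 = (lehmer a d s₁).1 *
      (lehmer (a * (lehmer a d s₁).1 ^ 2) (d * (lehmer a d s₁).2 ^ 2) s₂).1 ∧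
    (lehmer a d s).2 = (lehmer a d s₁).2 *
      (lehmer (a * (lehmer a d s₁).1 ^ 2) (d * (lehmer a d s₁).2 ^ 2) s₂).2 := by
  have ha' : (0 : ℝ) < a := by exact_mod_cast ha
  have hd' : (0 : ℝ) < d := by exact_mod_cast hd
  have hx : (√(a : ℝ)) ^ 2 = a := Real.sq_sqrt ha'.le
  have hy : (√(d : ℝ)) ^ 2 = d := Real.sq_sqrt hd'.le
  have hx0 : √(a : ℝ) ≠ 0 := (Real.sqrt_pos.mpr ha').ne'
  have hy0 : √(d : ℝ) ≠ 0 := (Real.sqrt_pos.mpr hd').ne'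
  have h1 := lehmer_complex a d _ _ hx hy s
  have h2 := lehmer_complex a d _ _ hx hy s₁
  have h3 := lehmer_complex (a * (lehmer a d s₁).1 ^ 2) (d * (lehmer a d s₁).2 ^ 2)
    (√(a : ℝ) * (lehmer a d s₁).1) (√(d : ℝ) * (lehmer a d s₁).2)
    (by push_cast; rw [mul_pow, hx]) (by push_cast; rw [mul_pow, hy]) s₂
  rw [h, pow_mul, h2, h3] at h1
  have hre := congrArg Complex.re h1
  have him := congrArg Complex.im h1
  simp only [Complex.add_re, Complex.add_im, Complex.mul_re, Complex.mul_im, Complex.ofReal_re,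
    Complex.ofReal_im, Complex.I_re, Complex.I_im, mul_zero, mul_one, sub_zero, add_zero,
    zero_add] at hre him
  rw [mul_assoc] at hre him
  constructor
  · exact_mod_cast (mul_left_cancel₀ hx0 hre).symm
  · exact_mod_cast (mul_left_cancel₀ hy0 him).symm

/-- **Descent.** Let `α₀ = u₀√A + v₀√(-B)` have norm `c ^ m₀` with `v₀` odd, where `m₀` is the
least positive exponent for which this is possible. Every primitive `α = u√A + v√(-B)` of norm
`c ^ z` with `v` odd, lying over the same prime as `α₀`, is `±` an odd power of `α₀`. -/
lemma descent {A B u₀ v₀ : ℤ} {c m₀ : ℕ} (hc : c.Prime) (hcD : ¬ (c : ℤ) ∣ 2 * A * B)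
    (hA : 0 < A) (hB : 0 < B) (hBodd : Odd B) (hm₀ : 0 < m₀)
    (h₀ : A * u₀ ^ 2 + B * v₀ ^ 2 = (c : ℤ) ^ m₀) (hv₀ : Odd v₀) (hcv₀ : ¬ (c : ℤ) ∣ v₀)
    (hmin : ∀ m, 0 < m → m < m₀ → ∀ u v : ℤ, Odd v → A * u ^ 2 + B * v ^ 2 ≠ (c : ℤ) ^ m)
    (z : ℕ) : ∀ u v : ℤ, 0 < z → Odd v → ¬ (c : ℤ) ∣ v →
    A * u ^ 2 + B * v ^ 2 = (c : ℤ) ^ z → (c : ℤ) ∣ u * v₀ - v * u₀ →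
    (B = 1 → Odd z ∧ m₀ = 1) →
    ∃ (s : ℕ) (ε : ℤ), z = (2 * s + 1) * m₀ ∧ |ε| = 1 ∧
      u = ε * (u₀ * (lehmer (A * u₀ ^ 2) (B * v₀ ^ 2) s).1) ∧
      v = ε * (v₀ * (lehmer (A * u₀ ^ 2) (B * v₀ ^ 2) s).2) := by
  have hcZ : Prime (c : ℤ) := Nat.prime_iff_prime_int.mp hc
  have hc0 : (c : ℤ) ≠ 0 := hcZ.ne_zero
  have hc2 : ¬ (c : ℤ) ∣ 2 := fun h => hcD ((h.mul_right A).mul_right B)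
  have hcA : ¬ (c : ℤ) ∣ A := fun h => hcD ((h.mul_left 2).mul_right B)
  have hcB : ¬ (c : ℤ) ∣ B := fun h => hcD (h.mul_left _)
  have hcu₀ : ¬ (c : ℤ) ∣ u₀ := by
    intro h
    have h1 : (c : ℤ) ∣ A * u₀ ^ 2 := (dvd_pow h two_ne_zero).mul_left _
    have h2 : (c : ℤ) ∣ B * v₀ ^ 2 := (Int.dvd_add_right h1).mp (h₀ ▸ dvd_pow_self _ hm₀.ne')
    rcases hcZ.dvd_or_dvd h2 with h | h
    · exact hcB h
    · exact hcv₀ (hcZ.dvd_of_dvd_pow h)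
  have hcodd : Odd (c : ℤ) := by
    rcases hc.eq_two_or_odd' with h | h
    · exact absurd (by rw [h]; rfl) hc2
    · exact_mod_cast h
  have hAu₀ : Even (A * u₀ ^ 2) := by
    have h1 : Odd ((c : ℤ) ^ m₀) := hcodd.pow
    rw [← h₀] at h1
    have h2 : Odd (B * v₀ ^ 2) := hBodd.mul hv₀.pow
    exact (Int.odd_add'.mp h1).mp h2
  -- if `c` does not divide `y`, powers of `c` can be cancelled against `y`
  have cancel : ∀ (n : ℕ) (x y : ℤ), ¬ (c : ℤ) ∣ y → (c : ℤ) ^ n ∣ y * x → (c : ℤ) ^ n ∣ x := by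
    intro n x y hy h
    have hcop : IsCoprime ((c : ℤ) ^ n) y :=
      IsCoprime.pow_left ((Prime.coprime_iff_not_dvd hcZ).mpr hy)
    exact hcop.dvd_of_dvd_mul_left h
  induction z using Nat.strong_induction_on with
  | _ z ih =>
  intro u v hz hv hcv h hdiv hB1
  have hzm : m₀ ≤ z := by
    by_contra hlt
    exact hmin z hz (by omega) u v hv h
  -- `α₀` divides `α`, with quotient `p + q√(-AB)`
  have hplus : ¬ (c : ℤ) ∣ u * v₀ + v * u₀ := by
    intro h1
    have h2 : (c : ℤ) ∣ 2 * (v * u₀) := by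
      have := dvd_sub h1 hdiv
      rwa [show u * v₀ + v * u₀ - (u * v₀ - v * u₀) = 2 * (v * u₀) by ring] at this
    rcases hcZ.dvd_or_dvd h2 with h | h
    · exact hc2 h
    · rcases hcZ.dvd_or_dvd h with h | h
      · exact hcv h
      · exact hcu₀ h
  obtain ⟨r, hr⟩ : ∃ r, z = m₀ + r := ⟨z - m₀, by omega⟩
  have hq : (c : ℤ) ^ m₀ ∣ v * u₀ - u * v₀ := by
    apply cancel _ _ (A * (u * v₀ + v * u₀))
    · intro h1
      rcases hcZ.dvd_or_dvd h1 with h | h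
      · exact hcA h
      · exact hplus h
    · refine ⟨v ^ 2 - (c : ℤ) ^ r * v₀ ^ 2, ?_⟩
      rw [hr, pow_add] at h
      linear_combination v ^ 2 * h₀ - v₀ ^ 2 * h
  obtain ⟨q, hq⟩ := hq
  have hp : (c : ℤ) ^ m₀ ∣ A * u * u₀ + B * v * v₀ := by
    apply cancel _ _ u₀ hcu₀
    refine ⟨u + B * v₀ * q, ?_⟩
    linear_combination u * h₀ + B * v₀ * hq
  obtain ⟨p, hp⟩ := hp
  have hcm0 : (c : ℤ) ^ m₀ ≠ 0 := pow_ne_zero _ hc0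
  have hu : u = u₀ * p - B * v₀ * q := by
    apply mul_left_cancel₀ hcm0
    linear_combination -u * h₀ + u₀ * hp - B * v₀ * hq
  have hv' : v = v₀ * p + A * u₀ * q := by
    apply mul_left_cancel₀ hcm0
    linear_combination -v * h₀ + v₀ * hp + A * u₀ * hq
  have hnorm : p ^ 2 + A * B * q ^ 2 = (c : ℤ) ^ r := by
    apply mul_left_cancel₀ hcm0
    rw [← pow_add, ← hr, ← h, hu, hv', ← h₀]
    ring
  rcases Nat.eq_zero_or_pos r with rfl | hrpos
  · -- the quotient is a unit
    have hz' : z = m₀ := by omega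
    rw [pow_zero] at hnorm
    have hq0 : q = 0 := by
      by_contra hq0
      have hq2 : 0 < q ^ 2 := by positivity
      have hAB : 0 < A * B := mul_pos hA hB
      have hp2 : p ^ 2 = 0 := by nlinarith [sq_nonneg p]
      have hp0 : p = 0 := by simpa using hp2
      have hA1 : A ∣ 1 := ⟨B * q ^ 2, by rw [← hnorm, hp0]; ring⟩
      have hA1' : A = 1 := by
        have := Int.le_of_dvd one_pos hA1
        omega
      have hu0 : Even u₀ := by
        rw [hA1', one_mul] at hAu₀
        exact (Int.even_pow.mp hAu₀).1
      rw [hp0, hA1'] at hv'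
      have : Even v := by
        rw [hv']
        simpa using hu0.mul_right q
      exact (Int.not_even_iff_odd.mpr hv) this
    refine ⟨0, p, by omega, ?_, ?_, ?_⟩
    · rw [hq0] at hnorm
      have : p ^ 2 = 1 := by linarith
      exact (pow_eq_one_iff_of_nonneg (abs_nonneg p) two_ne_zero).mp (by rw [sq_abs, this])
    · simp [lehmer, hu, hq0]; ring
    · simp [lehmer, hv', hq0]; ring
  · -- divide by `α₀` a second time
    set e := min r m₀ with he
    have her : e ≤ r := min_le_left _ _
    have hem : e ≤ m₀ := min_le_right _ _
    have he0 : 0 < e := lt_min hrpos hm₀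
    have hv2 : (c : ℤ) ^ e ∣ A * q * u₀ - p * v₀ := by
      apply cancel _ _ v hcv
      have h1 : v * (A * q * u₀ - p * v₀) =
          (c : ℤ) ^ m₀ * (A * q ^ 2) - (c : ℤ) ^ r * v₀ ^ 2 := by
        rw [hv', ← hnorm, ← h₀]; ring
      rw [h1]
      exact dvd_sub ((pow_dvd_pow _ hem).mul_right _) ((pow_dvd_pow _ her).mul_right _)
    obtain ⟨v', hv2⟩ := hv2
    have hnorm2 : A * (p * u₀ + B * q * v₀) ^ 2 + B * (A * q * u₀ - p * v₀) ^ 2 =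
        (c : ℤ) ^ z := by
      rw [hr, pow_add, ← hnorm, ← h₀]; ring
    have hu2 : (c : ℤ) ^ e ∣ p * u₀ + B * q * v₀ := by
      rw [← Int.pow_dvd_pow_iff two_ne_zero]
      rw [← pow_mul]
      apply cancel _ _ A hcA
      have h1 : A * (p * u₀ + B * q * v₀) ^ 2 = (c : ℤ) ^ z - B * (A * q * u₀ - p * v₀) ^ 2 := by
        rw [← hnorm2]; ring
      rw [h1, hv2, mul_pow, ← pow_mul]
      exact dvd_sub (pow_dvd_pow _ (by omega)) ((dvd_mul_right _ _).mul_left _)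
    obtain ⟨u', hu2⟩ := hu2
    obtain ⟨z', hz'⟩ : ∃ z', z = 2 * e + z' := ⟨z - 2 * e, by omega⟩
    have hnorm3 : A * u' ^ 2 + B * v' ^ 2 = (c : ℤ) ^ z' := by
      apply mul_left_cancel₀ (pow_ne_zero (2 * e) hc0)
      rw [← pow_add, ← hz', ← hnorm2, hu2, hv2]
      ring
    have hcev : Odd ((c : ℤ) ^ e * v') := by
      rw [← hv2]
      have h1 : A * q * u₀ - p * v₀ = 2 * (A * u₀ * q) - v := by rw [hv']; ring
      rw [h1]
      exact (even_two_mul _).sub_odd hv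
    have hv'odd : Odd v' := (Int.odd_mul.mp hcev).2
    rcases lt_or_ge r m₀ with hlt | hge
    · have he' : e = r := min_eq_left hlt.le
      exact absurd hnorm3 (hmin z' (by omega) (by omega) u' v' hv'odd)
    · have he' : e = m₀ := min_eq_right hge
      rw [he'] at hu2 hv2 hz'
      have huu : u = u' * (A * u₀ ^ 2 - B * v₀ ^ 2) - 2 * B * u₀ * v₀ * v' := by
        apply mul_left_cancel₀ hcm0
        rw [hu]
        linear_combination (-u₀ * p + B * v₀ * q) * h₀ + (A * u₀ ^ 2 - B * v₀ ^ 2) * hu2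
          - 2 * B * u₀ * v₀ * hv2
      have hvv : v = v' * (A * u₀ ^ 2 - B * v₀ ^ 2) + 2 * A * u₀ * v₀ * u' := by
        apply mul_left_cancel₀ hcm0
        rw [hv']
        linear_combination (-v₀ * p - A * u₀ * q) * h₀ + (A * u₀ ^ 2 - B * v₀ ^ 2) * hv2
          + 2 * A * u₀ * v₀ * hu2
      have hz'pos : 0 < z' := by
        rcases Nat.eq_zero_or_pos z' with h0 | h0
        · exfalso
          rw [h0, pow_zero] at hnorm3
          by_cases hB1' : B = 1
          · have := (hB1 hB1').1
            rw [hz', h0] at this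
            exact absurd this (by simp)
          · have h1 : 0 < v' ^ 2 := by
              have : v' ≠ 0 := by rintro rfl; exact absurd hv'odd (by decide)
              positivity
            have h2 : 2 * 1 ≤ B * v' ^ 2 :=
              mul_le_mul (by omega) (by omega) (by norm_num) hB.le
            linarith [mul_nonneg hA.le (sq_nonneg u')]
        · exact h0
      have hcv' : ¬ (c : ℤ) ∣ v' := by
        intro h1
        have h2 : (c : ℤ) ∣ B * v' ^ 2 := (dvd_pow h1 two_ne_zero).mul_left _
        have h3 : (c : ℤ) ∣ A * u' ^ 2 :=
          (Int.dvd_add_left h2).mp (hnorm3 ▸ dvd_pow_self _ hz'pos.ne')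
        have h4 : (c : ℤ) ∣ u' := by
          rcases hcZ.dvd_or_dvd h3 with h | h
          · exact absurd h hcA
          · exact hcZ.dvd_of_dvd_pow h
        exact hcv (hvv ▸ dvd_add (h1.mul_right _) (h4.mul_left _))
      have hdiv' : (c : ℤ) ∣ u' * v₀ - v' * u₀ := by
        have h1 : (c : ℤ) ∣ (A * (u' * v₀ + v' * u₀)) * (u' * v₀ - v' * u₀) := by
          have h2 : (A * (u' * v₀ + v' * u₀)) * (u' * v₀ - v' * u₀) =
              (c : ℤ) ^ z' * v₀ ^ 2 - (c : ℤ) ^ m₀ * v' ^ 2 := by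
            rw [← hnorm3, ← h₀]; ring
          rw [h2]
          exact dvd_sub ((dvd_pow_self _ hz'pos.ne').mul_right _)
            ((dvd_pow_self _ hm₀.ne').mul_right _)
        rcases hcZ.dvd_or_dvd h1 with h2 | h2
        · exfalso
          rcases hcZ.dvd_or_dvd h2 with h3 | h3
          · exact hcA h3
          · apply hcv
            have h4 : v = 2 * A * u₀ * (u' * v₀ + v' * u₀) - v' * (c : ℤ) ^ m₀ := by
              rw [hvv, ← h₀]; ring
            rw [h4]
            exact dvd_sub (h3.mul_left _) ((dvd_pow_self _ hm₀.ne').mul_left _)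
        · exact h2
      obtain ⟨s, ε, hs, hε, hus, hvs⟩ := ih z' (by omega) u' v' hz'pos hv'odd hcv' hnorm3 hdiv'
        (fun h1 => ⟨by
          have := (hB1 h1).1
          rw [hz'] at this
          exact (Nat.odd_add'.mp this).mpr (even_two_mul _), (hB1 h1).2⟩)
      refine ⟨s + 1, ε, ?_, hε, ?_, ?_⟩
      · rw [hz', hs]; ring
      · rw [huu, hus, hvs]; simp only [lehmer]; ring
      · rw [hvv, hus, hvs]; simp only [lehmer]; ring

/-- Passing from an odd power with real part `± 2 ^ h` and imaginary part `± b ^ l` to one of prime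
exponent `2 * s₂ + 1`. As `P` is always odd, it is `± 1` at every stage. -/
lemma reduce_to_prime {A B u₀ v₀ : ℤ} {s h l b k : ℕ} (hA : 0 < A) (hB : 0 < B) (hb : b.Prime)
    (heven : Even (A * u₀ ^ 2)) (hodd : Odd (B * v₀ ^ 2)) (hk : A * (2 ^ h) ^ 2 = 2 ^ k)
    (hu : |u₀ * (lehmer (A * u₀ ^ 2) (B * v₀ ^ 2) s).1| = 2 ^ h)
    (hv : |v₀ * (lehmer (A * u₀ ^ 2) (B * v₀ ^ 2) s).2| = (b : ℤ) ^ l) (hs : s ≠ 0) :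
    ∃ (s₁ s₂ : ℕ) (v₁ : ℤ), (2 * s₂ + 1).Prime ∧ 2 * s + 1 = (2 * s₁ + 1) * (2 * s₂ + 1) ∧
      2 ^ k + B * v₁ ^ 2 = (A * u₀ ^ 2 + B * v₀ ^ 2) ^ (2 * s₁ + 1) ∧
      (∃ g : ℕ, |v₁| = (b : ℤ) ^ g) ∧ |(lehmer (2 ^ k) (B * v₁ ^ 2) s₂).1| = 1 ∧
      ∃ f : ℕ, |(lehmer (2 ^ k) (B * v₁ ^ 2) s₂).2| = (b : ℤ) ^ f := by
  have hpow2 : (0 : ℤ) < 2 ^ h := by positivity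
  have hu0 : u₀ ≠ 0 := by
    rintro rfl
    simp at hu
    exact absurd hu hpow2.ne
  have hv0 : v₀ ≠ 0 := by
    rintro rfl
    simp at hodd
  have ha : 0 < A * u₀ ^ 2 := by positivity
  have hd : 0 < B * v₀ ^ 2 := by positivity
  obtain ⟨p, hp, hdvd⟩ := Nat.exists_prime_and_dvd (n := 2 * s + 1) (by omega)
  obtain ⟨q, hq⟩ := hdvd
  have hpq : Odd (p * q) := by rw [← hq]; exact odd_two_mul_add_one s
  obtain ⟨⟨s₂, rfl⟩, ⟨s₁, rfl⟩⟩ := Nat.odd_mul.mp hpq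
  have hss : 2 * s + 1 = (2 * s₁ + 1) * (2 * s₂ + 1) := by rw [hq]; ring
  obtain ⟨hP, hQ⟩ := lehmer_comp ha hd hss
  have hPodd := lehmer_fst_odd heven hodd s
  have hPs : IsUnit (lehmer (A * u₀ ^ 2) (B * v₀ ^ 2) s).1 := by
    have h1 : (lehmer (A * u₀ ^ 2) (B * v₀ ^ 2) s).1 ∣ 2 ^ h := by
      rw [← hu, dvd_abs]; exact dvd_mul_left _ _
    have h2 : IsCoprime (lehmer (A * u₀ ^ 2) (B * v₀ ^ 2) s).1 (2 ^ h) :=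
      IsCoprime.pow_right (Int.isCoprime_two_right.mpr hPodd)
    exact h2.isUnit_of_dvd' dvd_rfl h1
  have habs1 : ∀ {x : ℤ}, IsUnit x → |x| = 1 := fun h => Int.isUnit_iff_abs_eq.mp h
  have ha2 : A * u₀ ^ 2 = 2 ^ k := by
    rw [abs_mul, habs1 hPs, mul_one] at hu
    rw [← hk, ← hu, sq_abs]
  rw [hP] at hPs
  obtain ⟨hP1, hP2⟩ := IsUnit.mul_iff.mp hPs
  have hP1sq : (lehmer (A * u₀ ^ 2) (B * v₀ ^ 2) s₁).1 ^ 2 = 1 := by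
    rw [← sq_abs, habs1 hP1, one_pow]
  have hpowb : ∀ x : ℤ, x ∣ (b : ℤ) ^ l → ∃ g : ℕ, |x| = (b : ℤ) ^ g := by
    intro x hx
    have h1 : x.natAbs ∣ b ^ l := by
      have := Int.natAbs_dvd_natAbs.mpr hx
      rwa [Int.natAbs_pow, Int.natAbs_natCast] at this
    obtain ⟨g, -, hg⟩ := (Nat.dvd_prime_pow hb).mp h1
    exact ⟨g, by rw [Int.abs_eq_natAbs, hg]; push_cast; rfl⟩
  have hd1 : B * (v₀ * (lehmer (A * u₀ ^ 2) (B * v₀ ^ 2) s₁).2) ^ 2 =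
      B * v₀ ^ 2 * (lehmer (A * u₀ ^ 2) (B * v₀ ^ 2) s₁).2 ^ 2 := by ring
  have hn := lehmer_norm (A * u₀ ^ 2) (B * v₀ ^ 2) s₁
  rw [hQ, hP1sq, mul_one] at hv
  rw [hP1sq, mul_one] at hP2 hn
  refine ⟨s₁, s₂, v₀ * (lehmer (A * u₀ ^ 2) (B * v₀ ^ 2) s₁).2, hp, hss, ?_, ?_, ?_, ?_⟩
  · rw [hd1, ← hn, ha2]
  · apply hpowb
    rw [← hv, dvd_abs, ← mul_assoc]
    exact dvd_mul_right _ _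
  · rw [hd1, ← ha2]
    exact habs1 hP2
  · rw [hd1, ← ha2]
    apply hpowb
    rw [← hv, dvd_abs, ← mul_assoc]
    exact dvd_mul_left _ _

/-- The exponent `z` in a solution with `y` odd is the least positive exponent of a power of `c`
represented by the form `A u² + b v²` with `v` odd. -/
lemma exponent_minimal {A : ℤ} {b c k h l z : ℕ} (hb : b.Prime) (hc : c.Prime) (hbodd : Odd b)
    (hcodd : Odd c) (hbc : b ≠ c) (hA : A = 1 ∨ A = 2)
    (hAk : A * (2 ^ h) ^ 2 = 2 ^ k) (hz : 0 < z) (hsol : c ^ z = b ^ (2 * l + 1) + 2 ^ k) (m : ℕ)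
    (hm : 0 < m) (hmz : m < z) (u v : ℤ) (hv : Odd v) : A * u ^ 2 + b * v ^ 2 ≠ (c : ℤ) ^ m := by
  intro hrep
  have hbZ : Prime (b : ℤ) := Nat.prime_iff_prime_int.mp hb
  have hcZ : Prime (c : ℤ) := Nat.prime_iff_prime_int.mp hc
  have hApos : 0 < A := by rcases hA with rfl | rfl <;> norm_num
  have hbpos : (0 : ℤ) < b := by exact_mod_cast hb.pos
  have hb3 : (3 : ℤ) ≤ b := by
    have := hb.two_le
    have : b ≠ 2 := by rintro rfl; exact absurd hbodd (by decide)
    exact_mod_cast (show 3 ≤ b by omega)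
  have hc2 : ¬ (c : ℤ) ∣ 2 := by
    intro h
    have h : c ∣ 2 := by exact_mod_cast h
    have := (Nat.prime_dvd_prime_iff_eq hc Nat.prime_two).mp h
    rw [this] at hcodd
    exact absurd hcodd (by decide)
  have hcA : ¬ (c : ℤ) ∣ A := by
    rcases hA with rfl | rfl
    · intro h; exact hc2 (h.trans (one_dvd 2))
    · exact hc2
  have hcb : ¬ (c : ℤ) ∣ b := by
    intro h
    have h : c ∣ b := by exact_mod_cast h
    exact hbc ((Nat.prime_dvd_prime_iff_eq hc hb).mp h).symm
  have hbodd' : Odd (b : ℤ) := by exact_mod_cast hbodd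
  have hcodd' : Odd (c : ℤ) := by exact_mod_cast hcodd
  classical
  have hex : ∃ m, 0 < m ∧ ∃ u v : ℤ, Odd v ∧ A * u ^ 2 + b * v ^ 2 = (c : ℤ) ^ m :=
    ⟨m, hm, u, v, hv, hrep⟩
  obtain ⟨hm₀, u₀, v₀, hv₀, h₀⟩ := Nat.find_spec hex
  have hm₀z : Nat.find hex < z := (Nat.find_min' hex ⟨hm, u, v, hv, hrep⟩).trans_lt hmz
  have hmin' : ∀ m, 0 < m → m < Nat.find hex → ∀ u v : ℤ, Odd v →
      A * u ^ 2 + b * v ^ 2 ≠ (c : ℤ) ^ m :=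
    fun m h1 h2 u v h3 h4 => Nat.find_min hex h2 ⟨h1, u, v, h3, h4⟩
  generalize Nat.find hex = m₀ at *
  have hcv₀ : ¬ (c : ℤ) ∣ v₀ := by
    rintro ⟨v', rfl⟩
    have h1 : (c : ℤ) ∣ A * u₀ ^ 2 := by
      have h2 : (c : ℤ) ∣ b * (c * v') ^ 2 :=
        (dvd_pow (dvd_mul_right _ _) two_ne_zero).mul_left _
      exact (Int.dvd_add_left h2).mp (h₀ ▸ dvd_pow_self _ hm₀.ne')
    have h2 : (c : ℤ) ∣ u₀ := by
      rcases hcZ.dvd_or_dvd h1 with h | h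
      · exact absurd h hcA
      · exact hcZ.dvd_of_dvd_pow h
    obtain ⟨u', rfl⟩ := h2
    have h3 : (c : ℤ) ^ m₀ = c ^ 2 * (A * u' ^ 2 + b * v' ^ 2) := by rw [← h₀]; ring
    have hv' : Odd v' := (Int.odd_mul.mp hv₀).2
    have hm2 : 2 ≤ m₀ := by
      by_contra hlt
      have : m₀ = 1 := by omega
      rw [this, pow_one, sq, mul_assoc] at h3
      have h4 : (c : ℤ) * 1 = c * (c * (A * u' ^ 2 + b * v' ^ 2)) := by rw [mul_one, ← h3]
      have h5 := mul_left_cancel₀ hcZ.ne_zero h4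
      exact hcZ.not_isUnit (IsUnit.of_mul_eq_one _ h5.symm)
    obtain ⟨r, rfl⟩ : ∃ r, m₀ = 2 + r := ⟨m₀ - 2, by omega⟩
    rw [pow_add] at h3
    have h4 := mul_left_cancel₀ (pow_ne_zero 2 hcZ.ne_zero) h3
    rcases Nat.eq_zero_or_pos r with rfl | hr
    · have h5 : 0 < v' ^ 2 := by
        have : v' ≠ 0 := by rintro rfl; exact absurd hv' (by decide)
        positivity
      have h6 : 3 * 1 ≤ (b : ℤ) * v' ^ 2 := mul_le_mul hb3 (by omega) (by norm_num) hbpos.le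
      have h7 := mul_nonneg hApos.le (sq_nonneg u')
      rw [pow_zero] at h4
      linarith
    · exact hmin' r hr (by omega) u' v' hv' h4.symm
  have hY : Odd ((b : ℤ) ^ l) := hbodd'.pow
  have hcY : ¬ (c : ℤ) ∣ (b : ℤ) ^ l := fun h => hcb (hcZ.dvd_of_dvd_pow h)
  have hsolZ : A * (2 ^ h) ^ 2 + b * ((b : ℤ) ^ l) ^ 2 = (c : ℤ) ^ z := by
    rw [hAk]
    have : (c : ℤ) ^ z = b ^ (2 * l + 1) + 2 ^ k := by exact_mod_cast hsol
    rw [this]; ring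
  have hcD : ¬ (c : ℤ) ∣ 2 * A * b := by
    intro h
    rcases hcZ.dvd_or_dvd h with h | h
    · rcases hcZ.dvd_or_dvd h with h | h
      · exact hc2 h
      · exact hcA h
    · exact hcb h
  have hb1 : (b : ℤ) = 1 → Odd z ∧ m₀ = 1 := fun h => by omega
  -- the two conjugates of `α₀` lie over the two primes above `c`
  have main : ∀ v₀ : ℤ, A * u₀ ^ 2 + b * v₀ ^ 2 = (c : ℤ) ^ m₀ → Odd v₀ → ¬ (c : ℤ) ∣ v₀ →
      (c : ℤ) ∣ 2 ^ h * v₀ - (b : ℤ) ^ l * u₀ → False := by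
    intro v₀ h₀ hv₀ hcv₀ hdiv
    obtain ⟨s, ε, hs, hε, hus, hvs⟩ := descent hc hcD hApos hbpos hbodd' hm₀ h₀ hv₀ hcv₀ hmin' z
      _ _ hz hY hcY hsolZ hdiv hb1
    have hs0 : s ≠ 0 := by
      rintro rfl
      omega
    have hodd : Odd ((b : ℤ) * v₀ ^ 2) := hbodd'.mul hv₀.pow
    have heven : Even (A * u₀ ^ 2) := by
      have h1 : Odd ((c : ℤ) ^ m₀) := hcodd'.pow
      rw [← h₀] at h1
      exact (Int.odd_add'.mp h1).mp hodd
    have hu : |u₀ * (lehmer (A * u₀ ^ 2) (b * v₀ ^ 2) s).1| = 2 ^ h := by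
      rw [← one_mul |_|, ← hε, ← abs_mul, ← hus, abs_of_pos (by positivity)]
    have hv : |v₀ * (lehmer (A * u₀ ^ 2) (b * v₀ ^ 2) s).2| = (b : ℤ) ^ l := by
      rw [← one_mul |_|, ← hε, ← abs_mul, ← hvs, abs_of_pos (by positivity)]
    obtain ⟨s₁, s₂, v₁, hp, -, hn, ⟨g, hg⟩, hP, hQ⟩ :=
      reduce_to_prime hApos hbpos hb heven hodd hAk hu hv hs0
    have hv1 : v₁ ^ 2 = ((b : ℤ) ^ g) ^ 2 := by rw [← sq_abs, hg]
    refine lehmer_prime hb hbodd hp ?_ (dvd_mul_right _ _) ?_ hP hQ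
    · rw [hv1]; positivity
    · rintro rfl
      rw [hv1]
      rcases Nat.eq_zero_or_pos g with rfl | hg0
      · left; norm_num
      · right
        obtain ⟨g', rfl⟩ : ∃ g', g = g' + 1 := ⟨g - 1, by omega⟩
        exact ⟨3 * ((3 : ℤ) ^ g') ^ 2, by push_cast; ring⟩
  have hprod : (c : ℤ) ∣ (A * (2 ^ h * v₀ + (b : ℤ) ^ l * u₀)) *
      (2 ^ h * v₀ - (b : ℤ) ^ l * u₀) := by
    have : (A * (2 ^ h * v₀ + (b : ℤ) ^ l * u₀)) * (2 ^ h * v₀ - (b : ℤ) ^ l * u₀) =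
        (c : ℤ) ^ z * v₀ ^ 2 - (c : ℤ) ^ m₀ * ((b : ℤ) ^ l) ^ 2 := by
      rw [← hsolZ, ← h₀]; ring
    rw [this]
    exact dvd_sub ((dvd_pow_self _ hz.ne').mul_right _) ((dvd_pow_self _ hm₀.ne').mul_right _)
  rcases hcZ.dvd_or_dvd hprod with h1 | h1
  · rcases hcZ.dvd_or_dvd h1 with h1 | h1
    · exact hcA h1
    · refine main (-v₀) (by rw [neg_sq]; exact h₀) hv₀.neg (by rwa [dvd_neg]) ?_
      rw [← dvd_neg]
      convert h1 using 1
      ring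
  · exact main v₀ h₀ hv₀ hcv₀ h1

/-! ### Thue's lemma -/

lemma exists_fourth_root (x : ℕ) : ∃ t : ℕ, t ^ 4 ≤ x ∧ x < (t + 1) ^ 4 := by
  refine ⟨x.sqrt.sqrt, ?_, ?_⟩
  · calc x.sqrt.sqrt ^ 4 = (x.sqrt.sqrt ^ 2) ^ 2 := by ring
      _ ≤ x.sqrt ^ 2 := Nat.pow_le_pow_left (Nat.sqrt_le' _) 2
      _ ≤ x := Nat.sqrt_le' _
  · calc x < (x.sqrt + 1) ^ 2 := Nat.lt_succ_sqrt' x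
      _ ≤ ((x.sqrt.sqrt + 1) ^ 2) ^ 2 := Nat.pow_le_pow_left (Nat.lt_succ_sqrt' _) 2
      _ = _ := by ring

/-- **Thue's lemma** for the form `x² + D y²`: the lattice `x ≡ r y (mod n)`, on which the form is
divisible by `n`, contains a nonzero vector at which it equals `m * n` with `m ≤ 2√D`. -/
lemma thue {n D : ℕ} (hn : 0 < n) (hD : 0 < D) {r : ℤ} (hr : (n : ℤ) ∣ r ^ 2 + D) :
    ∃ (x y : ℤ) (m : ℕ), 0 < m ∧ m ^ 2 ≤ 4 * D ∧ (n : ℤ) ∣ x - r * y ∧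
      x ^ 2 + D * y ^ 2 = m * n := by
  obtain ⟨X, hX1, hX2⟩ := exists_fourth_root (n ^ 2 * D)
  obtain ⟨Y, hY1, hY2⟩ := exists_fourth_root (n ^ 2 / D)
  have hY1' : D * Y ^ 4 ≤ n ^ 2 := (Nat.mul_le_mul_left D hY1).trans (Nat.mul_div_le _ _)
  have hY2' : n ^ 2 < (Y + 1) ^ 4 * D := (Nat.div_lt_iff_lt_mul hD).mp hY2
  have hcard : n < (X + 1) * (Y + 1) := by
    refine lt_of_pow_lt_pow_left₀ 4 (Nat.zero_le _) ?_
    refine lt_of_mul_lt_mul_right (a := D) ?_ (Nat.zero_le _)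
    calc n ^ 4 * D = (n ^ 2 * D) * n ^ 2 := by ring
      _ < (X + 1) ^ 4 * ((Y + 1) ^ 4 * D) :=
        Nat.mul_lt_mul'' hX2 hY2'
      _ = ((X + 1) * (Y + 1)) ^ 4 * D := by ring
  have : NeZero n := ⟨hn.ne'⟩
  obtain ⟨⟨x₁, y₁⟩, h1, ⟨x₂, y₂⟩, h2, hne, heq⟩ :=
    Finset.exists_ne_map_eq_of_card_lt_of_maps_to
      (s := Finset.range (X + 1) ×ˢ Finset.range (Y + 1)) (t := (Finset.univ : Finset (ZMod n)))
      (f := fun p : ℕ × ℕ => ((p.1 - r * p.2 : ℤ) : ZMod n))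
      (by rw [Finset.card_product, Finset.card_range, Finset.card_range, Finset.card_univ,
            ZMod.card]; exact hcard)
      (fun _ _ => Finset.mem_coe.mpr (Finset.mem_univ _))
  simp only [Finset.mem_product, Finset.mem_range] at h1 h2
  have hdvd : (n : ℤ) ∣ ((x₁ : ℤ) - x₂) - r * ((y₁ : ℤ) - y₂) := by
    have h3 := (ZMod.intCast_eq_intCast_iff_dvd_sub _ _ _).mp heq.symm
    convert h3 using 1
    ring
  have hform : (n : ℤ) ∣ ((x₁ : ℤ) - x₂) ^ 2 + D * ((y₁ : ℤ) - y₂) ^ 2 := by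
    have h3 : ((x₁ : ℤ) - x₂) ^ 2 + D * ((y₁ : ℤ) - y₂) ^ 2 =
        (((x₁ : ℤ) - x₂) - r * ((y₁ : ℤ) - y₂)) * (((x₁ : ℤ) - x₂) + r * ((y₁ : ℤ) - y₂)) +
          (r ^ 2 + D) * ((y₁ : ℤ) - y₂) ^ 2 := by ring
    rw [h3]
    exact dvd_add (hdvd.mul_right _) (hr.mul_right _)
  set x : ℤ := (x₁ : ℤ) - x₂ with hx
  set y : ℤ := (y₁ : ℤ) - y₂ with hy
  have hDZ : (0 : ℤ) < D := by exact_mod_cast hD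
  have hnZ : (0 : ℤ) < n := by exact_mod_cast hn
  have hpos : 0 < x ^ 2 + D * y ^ 2 := by
    by_cases hx0 : x = 0
    · have hy0 : y ≠ 0 := by
        intro hy0
        apply hne
        rw [Prod.mk.injEq]
        omega
      positivity
    · positivity
  obtain ⟨m, hm⟩ := hform
  have hm0 : 0 < m := by
    by_contra hneg
    nlinarith
  lift m to ℕ using hm0.le
  refine ⟨x, y, m, by exact_mod_cast hm0, ?_, hdvd, by rw [hm]; ring⟩
  have hxX : x ^ 2 ≤ (X : ℤ) ^ 2 := sq_le_sq' (by omega) (by omega)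
  have hyY : y ^ 2 ≤ (Y : ℤ) ^ 2 := sq_le_sq' (by omega) (by omega)
  have hX1Z : (X : ℤ) ^ 4 ≤ n ^ 2 * D := by exact_mod_cast hX1
  have hY1Z : (D : ℤ) * Y ^ 4 ≤ n ^ 2 := by exact_mod_cast hY1'
  have hle : x ^ 2 + D * y ^ 2 ≤ (X : ℤ) ^ 2 + D * Y ^ 2 := by gcongr
  have hsq : (x ^ 2 + D * y ^ 2) ^ 2 ≤ ((X : ℤ) ^ 2 + D * Y ^ 2) ^ 2 :=
    pow_le_pow_left₀ hpos.le hle 2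
  have hfin : (m : ℤ) ^ 2 * n ^ 2 ≤ 4 * D * n ^ 2 := by
    calc (m : ℤ) ^ 2 * n ^ 2 = (x ^ 2 + D * y ^ 2) ^ 2 := by rw [hm]; ring
      _ ≤ ((X : ℤ) ^ 2 + D * Y ^ 2) ^ 2 := hsq
      _ ≤ 2 * (X ^ 4 + D * (D * Y ^ 4)) := by nlinarith [sq_nonneg ((X : ℤ) ^ 2 - D * Y ^ 2)]
      _ ≤ 2 * (n ^ 2 * D + D * n ^ 2) := by gcongr
      _ = 4 * D * n ^ 2 := by ring
  exact_mod_cast le_of_mul_le_mul_right hfin (by positivity)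

/-! ### Powers of `1 + √(-a)` -/

/-- `θ ^ n` for `θ = 1 + √(-a)`, as an element of `ℤ[√(-a)]`. -/
def thetaPow (a : ℤ) (n : ℕ) : Zsqrtd (-a) := (⟨1, 1⟩ : Zsqrtd (-a)) ^ n

lemma thetaPow_succ_re (a : ℤ) (n : ℕ) :
    (thetaPow a (n + 1)).re = (thetaPow a n).re - a * (thetaPow a n).im := by
  simp only [thetaPow, pow_succ, Zsqrtd.re_mul]; ring

lemma thetaPow_succ_im (a : ℤ) (n : ℕ) :
    (thetaPow a (n + 1)).im = (thetaPow a n).re + (thetaPow a n).im := by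
  simp only [thetaPow, pow_succ, Zsqrtd.im_mul]; ring

lemma thetaPow_add_re (a : ℤ) (m n : ℕ) : (thetaPow a (m + n)).re =
    (thetaPow a m).re * (thetaPow a n).re - a * (thetaPow a m).im * (thetaPow a n).im := by
  simp only [thetaPow, pow_add, Zsqrtd.re_mul]; ring

lemma thetaPow_add_im (a : ℤ) (m n : ℕ) : (thetaPow a (m + n)).im =
    (thetaPow a m).re * (thetaPow a n).im + (thetaPow a m).im * (thetaPow a n).re := by
  simp only [thetaPow, pow_add, Zsqrtd.im_mul]

lemma thetaPow_norm (a : ℤ) (n : ℕ) :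
    (thetaPow a n).re ^ 2 + a * (thetaPow a n).im ^ 2 = (1 + a) ^ n := by
  induction n with
  | zero => simp [thetaPow]
  | succ n ih => rw [thetaPow_succ_re, thetaPow_succ_im, pow_succ (1 + a), ← ih]; ring

lemma thetaPow_re_odd {a : ℤ} (ha : Even a) (n : ℕ) : Odd (thetaPow a n).re := by
  induction n with
  | zero => simp [thetaPow]
  | succ n ih => rw [thetaPow_succ_re]; exact ih.sub_even (ha.mul_right _)

lemma thetaPow_im_odd {a : ℤ} (ha : Even a) (s : ℕ) : Odd (thetaPow a (2 * s + 1)).im := by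
  rw [thetaPow_succ_im, two_mul, thetaPow_add_im]
  have h := thetaPow_re_odd ha (s + s)
  have h2 : (thetaPow a s).re * (thetaPow a s).im + (thetaPow a s).im * (thetaPow a s).re =
    2 * ((thetaPow a s).re * (thetaPow a s).im) := by ring
  rw [h2]
  exact h.add_even (even_two_mul _)

lemma lehmer_eq_thetaPow (a : ℤ) (s : ℕ) :
    (lehmer a 1 s).1 = (-1) ^ s * (thetaPow a (2 * s + 1)).im ∧
      (lehmer a 1 s).2 = (-1) ^ s * (thetaPow a (2 * s + 1)).re := by
  induction s with
  | zero => simp [lehmer, thetaPow]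
  | succ s ih =>
    rw [show 2 * (s + 1) + 1 = (2 * s + 1) + 1 + 1 by ring]
    simp only [lehmer, ih.1, ih.2, thetaPow_succ_re, thetaPow_succ_im, pow_succ]
    constructor <;> ring

/-- For `s = 2 ^ (e + 1) * w` with `w` odd, the imaginary part of `θ ^ s` has `2`-adic valuation
`e + 1`, whereas the norm of `θ ^ s` is `1` modulo `2 ^ (e + 3)`. -/
lemma thetaPow_two_adic {a : ℤ} (ha : Even a) (w e : ℕ) :
    (∃ o : ℤ, Odd o ∧ (thetaPow a (2 ^ (e + 1) * (2 * w + 1))).im = 2 ^ (e + 1) * o) ∧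
      ∃ q : ℤ, (1 + a) ^ (2 ^ (e + 1) * (2 * w + 1)) = 1 + 2 ^ (e + 3) * q := by
  have hdouble : ∀ n, (thetaPow a (2 * n)).im = 2 * ((thetaPow a n).re * (thetaPow a n).im) := by
    intro n
    rw [two_mul, thetaPow_add_im]; ring
  induction e with
  | zero =>
    constructor
    · refine ⟨_, (thetaPow_re_odd ha (2 * w + 1)).mul (thetaPow_im_odd ha w), ?_⟩
      rw [zero_add, pow_one, pow_one, hdouble]
    · have h1 : Odd ((1 + a) ^ (2 * w + 1)) := (odd_one.add_even ha).pow
      obtain ⟨q, hq⟩ := Int.eight_dvd_sq_sub_one_of_odd h1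
      refine ⟨q, ?_⟩
      rw [zero_add, pow_one, mul_comm 2, pow_mul]
      linear_combination hq
  | succ e ih =>
    obtain ⟨⟨o, ho, h1⟩, q, h2⟩ := ih
    have h3 : 2 ^ (e + 1 + 1) * (2 * w + 1) = 2 * (2 ^ (e + 1) * (2 * w + 1)) := by ring
    constructor
    · refine ⟨_, (thetaPow_re_odd ha (2 ^ (e + 1) * (2 * w + 1))).mul ho, ?_⟩
      rw [h3, hdouble, h1]; ring
    · refine ⟨q + 2 ^ (e + 2) * q ^ 2, ?_⟩
      rw [h3, mul_comm 2, pow_mul, h2]; ring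

/-- The odd-indexed imaginary parts of the powers of `θ` do not repeat along a residue class
modulo `4`. -/
lemma thetaPow_im_ne {a : ℤ} (ha : Even a) (r : ℕ) {s : ℕ} (hs : Even s) (hs0 : s ≠ 0) :
    (thetaPow a (2 * r + 1 + 2 * s)).im ≠ (thetaPow a (2 * r + 1)).im := by
  intro heq
  obtain ⟨e, w, hw, rfl⟩ := Nat.exists_eq_two_pow_mul_odd hs0
  obtain ⟨w, rfl⟩ := hw
  rcases e with _ | e
  · rw [pow_zero, one_mul] at hs
    exact absurd hs (Nat.not_even_iff_odd.mpr (odd_two_mul_add_one w))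
  obtain ⟨⟨o, ho, h1⟩, q, h2⟩ := thetaPow_two_adic ha w e
  set s := 2 ^ (e + 1) * (2 * w + 1)
  have h3 : (thetaPow a (2 * r + 1 + 2 * s)).im - (1 + a) ^ s * (thetaPow a (2 * r + 1)).im =
      2 * (thetaPow a s).im * (thetaPow a (s + (2 * r + 1))).re := by
    rw [show 2 * r + 1 + 2 * s = s + (s + (2 * r + 1)) by ring, thetaPow_add_im a s,
      thetaPow_add_im a s, thetaPow_add_re a s, ← thetaPow_norm]
    ring
  rw [heq, h1, h2] at h3
  have h4 : (2 : ℤ) ^ (e + 2) * (-2 * q * (thetaPow a (2 * r + 1)).im) =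
      2 ^ (e + 2) * (o * (thetaPow a (s + (2 * r + 1))).re) := by
    linear_combination h3
  have h5 := mul_left_cancel₀ (by positivity) h4
  have h6 := ho.mul (thetaPow_re_odd ha (s + (2 * r + 1)))
  rw [← h5, mul_assoc, neg_mul, odd_neg] at h6
  exact absurd h6 (Int.not_odd_iff_even.mpr (even_two_mul _))

lemma lehmer_one_eq {k s : ℕ} (hk : 0 < k) (hs : s ≠ 0) (hP : |(lehmer (2 ^ k) 1 s).1| = 1) :
    (s = 1 ∧ (k = 1 ∨ k = 2)) ∨ (3 ≤ k ∧ Odd s) := by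
  have ha : Even ((2 : ℤ) ^ k) := even_two.pow_of_ne_zero hk.ne'
  rw [(lehmer_eq_thetaPow _ _).1, abs_mul, abs_pow, abs_neg, abs_one, one_pow, one_mul] at hP
  have hzero : (thetaPow (2 ^ k) 1).im = 1 := by simp [thetaPow]
  have hstep : ∀ r, (thetaPow (2 ^ k) (2 * (r + 1) + 1)).im =
      (1 - 2 ^ k) * (thetaPow (2 ^ k) (2 * r + 1)).im +
        2 * (thetaPow (2 ^ k) (2 * r + 1)).re := by
    intro r
    rw [show 2 * (r + 1) + 1 = (2 * r + 1) + 1 + 1 by ring]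
    simp only [thetaPow_succ_re, thetaPow_succ_im]
    ring
  have hthree : (thetaPow (2 ^ k) 3).im = 3 - 2 ^ k := by
    have := hstep 0
    simp only [mul_zero, zero_add, mul_one] at this
    rw [this, hzero]
    simp [thetaPow]
    ring
  -- indices congruent to `1` modulo `4`
  have hev : Even s → (thetaPow (2 ^ k) (2 * s + 1)).im ≠ 1 := by
    intro h
    have := thetaPow_im_ne ha 0 h hs
    rwa [mul_zero, zero_add, hzero, add_comm] at this
  -- indices congruent to `3` modulo `4`
  have hod : Odd s → s ≠ 1 → (thetaPow (2 ^ k) (2 * s + 1)).im ≠ 3 - 2 ^ k := by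
    rintro ⟨r, rfl⟩ h1
    have := thetaPow_im_ne ha 1 (s := 2 * r) (even_two_mul r) (by omega)
    rwa [show 2 * 1 + 1 = 3 by rfl, hthree, show 3 + 2 * (2 * r) = 2 * (2 * r + 1) + 1 by ring]
      at this
  have h4 : (thetaPow (2 ^ k) (2 * s + 1)).im = 1 ∨ (thetaPow (2 ^ k) (2 * s + 1)).im = -1 :=
    eq_or_eq_neg_of_abs_eq hP
  rcases Nat.lt_or_ge k 2 with hk2 | hk2
  · obtain rfl : k = 1 := by omega
    have hmod : ∀ r, (thetaPow (2 ^ 1) (2 * r + 1)).im % 4 = 1 := by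
      intro r
      induction r with
      | zero => rw [mul_zero, zero_add, hzero]; rfl
      | succ r ih =>
        rw [hstep]
        obtain ⟨x, hx⟩ := thetaPow_re_odd ha (2 * r + 1)
        rw [hx]
        omega
    have := hmod s
    rcases Nat.even_or_odd s with h | h
    · exact absurd (h4.resolve_right (by omega)) (hev h)
    · left
      refine ⟨?_, Or.inl rfl⟩
      by_contra h1
      have := hod h h1
      omega
  · have h4k : (4 : ℤ) ∣ 2 ^ k := by
      exact pow_dvd_pow (2 : ℤ) hk2
    obtain ⟨q, hq⟩ := h4k
    have hmod : ∀ r : ℕ, (thetaPow (2 ^ k) (2 * r + 1)).im % 4 = (2 * r + 1) % 4 := by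
      intro r
      induction r with
      | zero => rw [mul_zero, zero_add, hzero]; rfl
      | succ r ih =>
        rw [hstep]
        obtain ⟨x, hx⟩ := thetaPow_re_odd ha (2 * r + 1)
        rw [hx]
        generalize (thetaPow (2 ^ k) (2 * r + 1)).im = i at ih ⊢
        rw [hq, sub_mul, mul_assoc]
        push_cast
        omega
    have := hmod s
    rcases Nat.even_or_odd s with h | h
    · obtain ⟨r, hr⟩ := id h
      exact absurd (h4.resolve_right (by omega)) (hev h)
    · rcases Nat.lt_or_ge k 3 with hk3 | hk3
      · obtain rfl : k = 2 := by omega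
        left
        refine ⟨?_, Or.inr rfl⟩
        by_contra h1
        have := hod h h1
        obtain ⟨r, hr⟩ := id h
        omega
      · exact Or.inr ⟨hk3, h⟩

/-! ### Solutions with even `y` -/

lemma exists_repr_one {A c : ℕ} (hc : c.Prime) (hcodd : Odd c) (hA : A = 1 ∨ A = 2) {X Y : ℤ}
    (hX : ¬ (c : ℤ) ∣ X) (hdvd : (c : ℤ) ∣ A * X ^ 2 + Y ^ 2) :
    ∃ u v : ℤ, Odd v ∧ A * u ^ 2 + v ^ 2 = c := by
  have hcZ : Prime (c : ℤ) := Nat.prime_iff_prime_int.mp hc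
  have hcodd' : Odd (c : ℤ) := by exact_mod_cast hcodd
  obtain ⟨a, e, hae⟩ := (hcZ.coprime_iff_not_dvd.mpr hX)
  have hr : (c : ℤ) ∣ (e * Y) ^ 2 + A := by
    have : (e * Y) ^ 2 + A = e ^ 2 * (A * X ^ 2 + Y ^ 2) + c * (A * a * (1 + e * X)) := by
      linear_combination (-(A : ℤ) * (1 + e * X)) * hae
    rw [this]
    exact dvd_add (hdvd.mul_left _) (dvd_mul_right _ _)
  have hA0 : 0 < A := by omega
  obtain ⟨x, y, m, hm0, hm, -, hxy⟩ := thue hc.pos hA0 hr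
  have hm2 : m = 1 ∨ m = 2 := by
    have : m < 3 := by
      by_contra h
      have : 3 ^ 2 ≤ m ^ 2 := Nat.pow_le_pow_left (by omega) 2
      omega
    omega
  have hsum : ∀ x y : ℤ, x ^ 2 + y ^ 2 = c → ∃ u v : ℤ, Odd v ∧ (1 : ℕ) * u ^ 2 + v ^ 2 = c := by
    intro x y h
    rcases Int.even_or_odd y with hy | hy
    · refine ⟨y, x, ?_, by push_cast; linarith⟩
      have h1 : Odd (x ^ 2 + y ^ 2) := h ▸ hcodd'
      exact (Int.odd_pow.mp ((Int.odd_add.mp h1).mpr (hy.pow_of_ne_zero two_ne_zero))).resolve_right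
        two_ne_zero
    · exact ⟨x, y, hy, by push_cast; linarith⟩
  rcases hA with rfl | rfl <;> rcases hm2 with rfl | rfl
  · exact hsum x y (by push_cast at hxy; linarith)
  · push_cast at hxy
    have h1 : Even (x + y) := by
      have h2 : Even ((x + y) ^ 2) := ⟨c + x * y, by linear_combination hxy⟩
      exact (Int.even_pow.mp h2).1
    obtain ⟨w, hw⟩ := h1
    refine hsum w (x - w) ?_
    obtain rfl : y = w + w - x := by linarith
    nlinarith
  · push_cast at hxy
    refine ⟨y, x, ?_, by push_cast; linarith⟩
    have h1 : Odd (x ^ 2 + 2 * y ^ 2) := by rw [hxy, one_mul]; exact hcodd'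
    exact (Int.odd_pow.mp ((Int.odd_add.mp h1).mpr (even_two_mul _))).resolve_right two_ne_zero
  · push_cast at hxy
    have h1 : Even x := by
      have h2 : Even (x ^ 2) := ⟨c - y ^ 2, by linear_combination hxy⟩
      exact (Int.even_pow.mp h2).1
    obtain ⟨w, rfl⟩ := h1
    have h2 : 2 * w ^ 2 + y ^ 2 = c := by linarith
    refine ⟨w, y, ?_, by push_cast; exact h2⟩
    have h1 : Odd (2 * w ^ 2 + y ^ 2) := h2 ▸ hcodd'
    exact (Int.odd_pow.mp ((Int.odd_add'.mp h1).mpr (even_two_mul _))).resolve_right two_ne_zero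

/-- In a solution with `y` even and `z` odd, `z = 1` apart from `27 = 25 + 2` and
`125 = 121 + 4`. -/
lemma even_y_odd_z {b c k j z : ℕ} (hb : b.Prime) (hc : c.Prime) (hbodd : Odd b)
    (hcodd : Odd c) (hbc : b ≠ c) (hk : 0 < k) (hz : Odd z)
    (hsol : c ^ z = b ^ (2 * j) + 2 ^ k) :
    z = 1 ∨ (z = 3 ∧ ((k = 1 ∧ c = 3) ∨ (k = 2 ∧ c = 5))) := by
  have hbZ : Prime (b : ℤ) := Nat.prime_iff_prime_int.mp hb
  have hcZ : Prime (c : ℤ) := Nat.prime_iff_prime_int.mp hc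
  have hc2 : ¬ (c : ℤ) ∣ 2 := by
    intro h
    have h : c ∣ 2 := by exact_mod_cast h
    have := (Nat.prime_dvd_prime_iff_eq hc Nat.prime_two).mp h
    rw [this] at hcodd
    exact absurd hcodd (by decide)
  have hcb : ¬ (c : ℤ) ∣ b := by
    intro h
    have h : c ∣ b := by exact_mod_cast h
    exact hbc ((Nat.prime_dvd_prime_iff_eq hc hb).mp h).symm
  have hbodd' : Odd (b : ℤ) := by exact_mod_cast hbodd
  have hcodd' : Odd (c : ℤ) := by exact_mod_cast hcodd
  have hz0 : 0 < z := hz.pos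
  obtain ⟨A, h, hA, hAk⟩ : ∃ A h : ℕ, (A = 1 ∨ A = 2) ∧ (A : ℤ) * (2 ^ h) ^ 2 = 2 ^ k := by
    rcases Nat.even_or_odd' k with ⟨h, rfl | rfl⟩
    · exact ⟨1, h, Or.inl rfl, by push_cast; ring⟩
    · exact ⟨2, h, Or.inr rfl, by push_cast; ring⟩
  have hApos : (0 : ℤ) < A := by rcases hA with rfl | rfl <;> norm_num
  have hcA : ¬ (c : ℤ) ∣ A := by
    rcases hA with rfl | rfl
    · intro h; exact hc2 (h.trans (one_dvd 2))
    · exact hc2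
  have hsolZ : (A : ℤ) * (2 ^ h) ^ 2 + ((b : ℤ) ^ j) ^ 2 = (c : ℤ) ^ z := by
    rw [hAk]
    have : (c : ℤ) ^ z = b ^ (2 * j) + 2 ^ k := by exact_mod_cast hsol
    rw [this]; ring
  have hcX : ¬ (c : ℤ) ∣ 2 ^ h := fun h => hc2 (hcZ.dvd_of_dvd_pow h)
  have hcY : ¬ (c : ℤ) ∣ (b : ℤ) ^ j := fun h => hcb (hcZ.dvd_of_dvd_pow h)
  obtain ⟨u₀, v₀, hv₀, h₀⟩ := exists_repr_one hc hcodd hA hcX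
    (hsolZ ▸ dvd_pow_self _ hz0.ne')
  have hcD : ¬ (c : ℤ) ∣ 2 * A * 1 := by
    rw [mul_one]
    intro h
    rcases hcZ.dvd_or_dvd h with h | h
    · exact hc2 h
    · exact hcA h
  have hcv₀ : ¬ (c : ℤ) ∣ v₀ := by
    intro hd
    have h1 : (c : ℤ) ∣ A * u₀ ^ 2 := by
      have h2 : (c : ℤ) ∣ v₀ ^ 2 := dvd_pow hd two_ne_zero
      exact (Int.dvd_add_left h2).mp (dvd_of_eq h₀.symm)
    have h2 : (c : ℤ) ∣ u₀ := by
      rcases hcZ.dvd_or_dvd h1 with h | h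
      · exact absurd h hcA
      · exact hcZ.dvd_of_dvd_pow h
    obtain ⟨u', rfl⟩ := h2
    obtain ⟨v', rfl⟩ := hd
    have h4 : (c : ℤ) * (c * (A * u' ^ 2 + v' ^ 2)) = c * 1 := by
      linear_combination h₀
    exact hcZ.not_isUnit (IsUnit.of_mul_eq_one _ (mul_left_cancel₀ hcZ.ne_zero h4))
  have main : ∀ v₀ : ℤ, A * u₀ ^ 2 + v₀ ^ 2 = (c : ℤ) → Odd v₀ → ¬ (c : ℤ) ∣ v₀ →
      (c : ℤ) ∣ 2 ^ h * v₀ - (b : ℤ) ^ j * u₀ →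
      z = 1 ∨ (z = 3 ∧ ((k = 1 ∧ c = 3) ∨ (k = 2 ∧ c = 5))) := by
    intro v₀ h₀ hv₀ hcv₀ hdiv
    obtain ⟨s, ε, hs, hε, hus, hvs⟩ := descent (B := 1) (m₀ := 1) hc hcD hApos one_pos odd_one
      one_pos (by rw [one_mul, pow_one]; exact h₀) hv₀ hcv₀ (by omega) z
      (2 ^ h) ((b : ℤ) ^ j) hz0 hbodd'.pow hcY (by rw [one_mul]; exact hsolZ) hdiv
      (fun _ => ⟨hz, rfl⟩)
    rcases Nat.eq_zero_or_pos s with rfl | hs0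
    · left; omega
    have hodd : Odd ((1 : ℤ) * v₀ ^ 2) := odd_one.mul hv₀.pow
    have heven : Even (A * u₀ ^ 2) := by
      have h1 := hcodd'
      rw [← h₀, ← one_mul (v₀ ^ 2)] at h1
      exact (Int.odd_add'.mp h1).mp hodd
    have hu : |u₀ * (lehmer (A * u₀ ^ 2) (1 * v₀ ^ 2) s).1| = 2 ^ h := by
      have h1 := congrArg abs hus
      rw [abs_mul, hε, one_mul, abs_of_pos (by positivity)] at h1
      exact h1.symm
    have hbj : (0 : ℤ) < (b : ℤ) ^ j := by have := hb.pos; positivity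
    have hv : |v₀ * (lehmer (A * u₀ ^ 2) (1 * v₀ ^ 2) s).2| = (b : ℤ) ^ j := by
      have h1 := congrArg abs hvs
      rw [abs_mul, hε, one_mul, abs_of_pos hbj] at h1
      exact h1.symm
    obtain ⟨s₁, s₂, v₁, hp, hss, hn, ⟨g, hg⟩, hP, hQ⟩ :=
      reduce_to_prime hApos one_pos hb heven hodd hAk hu hv hs0.ne'
    have hv1 : v₁ ^ 2 = ((b : ℤ) ^ g) ^ 2 := by rw [← sq_abs, hg]
    have hs₂ : s₂ ≠ 0 := by rintro rfl; exact Nat.not_prime_one hp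
    rw [one_mul] at hP hQ hn
    rcases Nat.eq_zero_or_pos g with rfl | hg0
    · -- here `v₁ = ± 1`, and `2 ^ k + 1` is a power of `c`
      rw [pow_zero, one_pow] at hv1
      rw [hv1] at hP hn
      have hck : 2 ^ k + 1 = c ^ (2 * s₁ + 1) := by
        rw [one_mul, h₀] at hn
        exact_mod_cast hn
      have hs₁ : s₁ = 0 := by
        by_contra hs₁
        have h1 := geom_sum_mul (c : ℤ) (2 * s₁ + 1)
        have h2 : ((2 : ℤ) ^ k) = c ^ (2 * s₁ + 1) - 1 := by
          rw [eq_sub_iff_add_eq]; exact_mod_cast hck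
        rw [← h2] at h1
        have h3 : Odd (∑ i ∈ Finset.range (2 * s₁ + 1), (c : ℤ) ^ i) := by
          have h4 : Odd (∑ i ∈ Finset.range (2 * s₁ + 1), c ^ i) := by
            rw [Finset.odd_sum_iff_odd_card_odd,
              Finset.filter_true_of_mem (fun i _ => hcodd.pow), Finset.card_range]
            exact odd_two_mul_add_one s₁
          exact_mod_cast h4
        have h4 : IsUnit (∑ i ∈ Finset.range (2 * s₁ + 1), (c : ℤ) ^ i) := by
          have h5 : IsCoprime (∑ i ∈ Finset.range (2 * s₁ + 1), (c : ℤ) ^ i) (2 ^ k) :=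
            IsCoprime.pow_right (Int.isCoprime_two_right.mpr h3)
          exact h5.isUnit_of_dvd' dvd_rfl (Dvd.intro _ h1)
        have h6 : (1 : ℤ) < ∑ i ∈ Finset.range (2 * s₁ + 1), (c : ℤ) ^ i := by
          rw [Finset.sum_range_succ']
          have h7 : (0 : ℤ) < ∑ i ∈ Finset.range (2 * s₁), (c : ℤ) ^ (i + 1) := by
            have := hc.pos
            apply Finset.sum_pos (fun i _ => by positivity)
            exact Finset.nonempty_range_iff.mpr (by omega)
          rw [pow_zero]; linarith
        rcases Int.isUnit_iff.mp h4 with h7 | h7 <;> omega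
      subst hs₁
      rw [mul_zero, zero_add, one_mul] at hss
      rw [mul_zero, zero_add, pow_one] at hck
      rcases lehmer_one_eq hk hs₂ hP with ⟨rfl, hk2⟩ | ⟨hk3, hs2odd⟩
      · right
        refine ⟨by omega, ?_⟩
        rcases hk2 with rfl | rfl
        · left; omega
        · right; omega
      · exfalso
        obtain ⟨n, hn2⟩ := Nat.pow_of_pow_add_prime one_lt_two hk.ne' (hck ▸ hc)
        have hn2' : 2 ≤ n := by
          by_contra hlt
          interval_cases n <;> omega
        obtain ⟨q, rfl⟩ : ∃ q, n = q + 2 := ⟨n - 2, by omega⟩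
        obtain ⟨r, hr⟩ := hs2odd
        have hz4 : z = 4 * r + 3 := by omega
        have h5 : (2 : ZMod 5) ^ k = 1 := by
          rw [hn2, pow_add, mul_comm, pow_mul]
          rw [show (2 : ZMod 5) ^ 2 ^ 2 = 1 by decide, one_pow]
        have h6 : (c : ZMod 5) = 2 := by
          rw [← hck]; push_cast; rw [h5]; decide
        have h7 : (c : ZMod 5) ^ z = ((b : ZMod 5) ^ j) ^ 2 + 2 ^ k := by
          rw [← pow_mul, mul_comm j]; exact_mod_cast congrArg (Nat.cast : ℕ → ZMod 5) hsol
        rw [h5, h6, hz4, pow_add, pow_mul, show (2 : ZMod 5) ^ 4 = 1 by decide, one_pow] at h7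
        generalize (b : ZMod 5) ^ j = w at h7
        revert h7 w
        decide
    · exfalso
      obtain ⟨g', rfl⟩ : ∃ g', g = g' + 1 := ⟨g - 1, by omega⟩
      refine lehmer_prime hb hbodd hp ?_ ?_ ?_ hP hQ
      · have := hb.pos
        rw [hv1]; positivity
      · exact ⟨b * ((b : ℤ) ^ g') ^ 2, by rw [hv1]; ring⟩
      · rintro rfl
        right
        exact ⟨((3 : ℤ) ^ g') ^ 2, by rw [hv1]; push_cast; ring⟩
  have hprod : (c : ℤ) ∣ (A * (2 ^ h * v₀ + (b : ℤ) ^ j * u₀)) *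
      (2 ^ h * v₀ - (b : ℤ) ^ j * u₀) := by
    have : (A * (2 ^ h * v₀ + (b : ℤ) ^ j * u₀)) * (2 ^ h * v₀ - (b : ℤ) ^ j * u₀) =
        (c : ℤ) ^ z * v₀ ^ 2 - c * ((b : ℤ) ^ j) ^ 2 := by
      rw [← hsolZ, ← h₀]; ring
    rw [this]
    exact dvd_sub ((dvd_pow_self _ hz0.ne').mul_right _) (dvd_mul_right _ _)
  rcases hcZ.dvd_or_dvd hprod with h1 | h1
  · rcases hcZ.dvd_or_dvd h1 with h1 | h1
    · exact absurd h1 hcA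
    · refine main (-v₀) (by rw [neg_sq]; exact h₀) hv₀.neg (by rwa [dvd_neg]) ?_
      rw [← dvd_neg]
      convert h1 using 1
      ring
  · exact main v₀ h₀ hv₀ hcv₀ h1

/-- With both exponents even, `c ^ (z / 2) ± b ^ (y / 2)` are powers of two, and one of
`2 ^ m ± 1` is a power of `3`. -/
lemma even_y_even_z {b c k j w : ℕ} (hb : b.Prime) (hc : c.Prime) (hbodd : Odd b)
    (hcodd : Odd c) (hj : 0 < j) (hsol : c ^ (2 * w) = b ^ (2 * j) + 2 ^ k) :
    (b = 3 ∧ c = 5 ∧ k = 4 ∧ j = 1 ∧ w = 1) ∨ (b = 7 ∧ c = 3 ∧ k = 5 ∧ j = 1 ∧ w = 2) := by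
  obtain ⟨m, hp, hq, rfl⟩ : ∃ m, c ^ w = 2 ^ m + 1 ∧ b ^ j + 1 = 2 ^ m ∧ k = m + 2 := by
    have hpo : Odd (c ^ w) := hcodd.pow
    have hqo : Odd (b ^ j) := hbodd.pow
    have hsq : (c ^ w) ^ 2 = (b ^ j) ^ 2 + 2 ^ k := by
      rw [← pow_mul, ← pow_mul, mul_comm w, mul_comm j, hsol]
    generalize c ^ w = p at *
    generalize b ^ j = q at *
    have hlt : q < p := by
      refine lt_of_pow_lt_pow_left₀ 2 (Nat.zero_le _) ?_
      have := Nat.two_pow_pos k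
      omega
    obtain ⟨d, rfl⟩ : ∃ d, p = q + d := ⟨p - q, by omega⟩
    have hprod : d * (2 * q + d) = 2 ^ k := by nlinarith
    obtain ⟨i, -, hi⟩ := (Nat.dvd_prime_pow Nat.prime_two).mp (Dvd.intro _ hprod)
    obtain ⟨i', -, hi'⟩ := (Nat.dvd_prime_pow Nat.prime_two).mp (Dvd.intro_left _ hprod)
    have hdeven : Even d := (Nat.odd_add.mp hpo).mp hqo
    have h1 : i = 1 := by
      rcases i with _ | _ | i
      · rw [hi] at hdeven; exact absurd hdeven (by decide)
      · rfl
      · have h2 : i + 2 < i' := by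
          rw [← Nat.pow_lt_pow_iff_right (a := 2) one_lt_two, ← hi']
          have := hqo.pos
          have hi2 : d = 2 ^ (i + 2) := hi
          omega
        obtain ⟨e, rfl⟩ : ∃ e, i' = i + 3 + e := ⟨i' - (i + 3), by omega⟩
        obtain ⟨r, hr⟩ := hqo
        have h3 : 2 ^ (i + 1 + 1) = 4 * 2 ^ i := by ring
        have h4 : 2 ^ (i + 3 + e) = 4 * (2 * 2 ^ i * 2 ^ e) := by ring
        omega
    rw [h1, pow_one] at hi
    subst hi
    rcases i' with _ | m
    · omega
    · rw [pow_succ] at hi'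
      refine ⟨m, by omega, by omega, ?_⟩
      have h2 : 2 ^ (m + 2) = 2 ^ k := by rw [← hprod, hi']; ring
      exact (Nat.pow_right_injective le_rfl h2).symm
  have hpow8 : ∀ n : ℕ, 3 ^ n % 8 = 1 ∨ 3 ^ n % 8 = 3 := by
    intro n
    induction n with
    | zero => exact Or.inl rfl
    | succ n ih => rw [pow_succ]; omega
  rcases Nat.even_or_odd' m with ⟨n, rfl | rfl⟩
  · left
    have h3 : 3 ∣ b ^ j := by
      have h1 : 2 ^ (2 * n) % 3 = 1 := by
        rw [pow_mul, Nat.pow_mod]; norm_num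
      omega
    have hb3 : b = 3 := ((Nat.prime_dvd_prime_iff_eq Nat.prime_three hb).mp
      (Nat.prime_three.dvd_of_dvd_pow h3)).symm
    subst hb3
    have hn : n = 1 := by
      rcases n with _ | _ | n
      · have := Nat.pow_pos (n := j) (show 0 < 3 by norm_num)
        rw [mul_zero, pow_zero] at hq
        omega
      · rfl
      · have h8 := hpow8 j
        have : 2 ^ (2 * (n + 1 + 1)) = 8 * (2 * 2 ^ (2 * n)) := by ring
        omega
    subst hn
    have hc5 := (Nat.Prime.pow_eq_iff (by norm_num : Nat.Prime 5)).mp (show c ^ w = 5 by rw [hp]; norm_num)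
    have hb3 := (Nat.Prime.pow_eq_iff Nat.prime_three).mp (show 3 ^ j = 3 by omega)
    exact ⟨rfl, hc5.1, rfl, hb3.2, hc5.2⟩
  · right
    have h3 : 3 ∣ c ^ w := by
      have h1 : 2 ^ (2 * n + 1) % 3 = 2 := by
        rw [pow_succ, pow_mul, Nat.mul_mod, Nat.pow_mod]; norm_num
      omega
    have hc3 : c = 3 := ((Nat.prime_dvd_prime_iff_eq Nat.prime_three hc).mp
      (Nat.prime_three.dvd_of_dvd_pow h3)).symm
    subst hc3
    rcases n with _ | _ | n
    · exfalso
      have h1 : b ^ j = 1 := by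
        rw [mul_zero, zero_add, pow_one] at hq; omega
      rcases Nat.pow_eq_one.mp h1 with h | h
      · exact hb.one_lt.ne' h
      · omega
    · have hb7 := (Nat.Prime.pow_eq_iff (by norm_num : Nat.Prime 7)).mp (show b ^ j = 7 by omega)
      have h9 : 3 ^ w = 3 ^ 2 := by rw [hp]; norm_num
      exact ⟨hb7.1, rfl, rfl, hb7.2, Nat.pow_right_injective (by norm_num) h9⟩
    · exfalso
      have h16 : 2 ^ (2 * (n + 1 + 1) + 1) = 16 * (2 * 2 ^ (2 * n)) := by ring
      have h4 : ∀ n : ℕ, 3 ^ n % 16 = 1 → 3 ^ n % 5 = 1 := by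
        intro n hn
        rw [← Nat.div_add_mod n 4, pow_add, pow_mul, Nat.mul_mod, Nat.pow_mod] at hn ⊢
        have := Nat.mod_lt n (show 0 < 4 by norm_num)
        interval_cases n % 4 <;> simp at hn ⊢
      have h5 := h4 w (by omega)
      have h6 : 5 ∣ 2 ^ (2 * (n + 1 + 1) + 1) := by omega
      have := Nat.le_of_dvd (by norm_num) (Nat.Prime.dvd_of_dvd_pow (by norm_num) h6)
      omega

/-- The solutions with `y` even and `z ≠ 1`: `27 = 25 + 2`, `125 = 121 + 4`, `25 = 9 + 16` and
`81 = 49 + 32`. -/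
lemma even_y_cases {b c k j z : ℕ} (hb : b.Prime) (hc : c.Prime) (hbodd : Odd b)
    (hcodd : Odd c) (hbc : b ≠ c) (hk : 0 < k) (hj : 0 < j) (hz : 0 < z)
    (hsol : c ^ z = b ^ (2 * j) + 2 ^ k) :
    z = 1 ∨ (b = 5 ∧ c = 3 ∧ k = 1 ∧ j = 1 ∧ z = 3) ∨ (b = 11 ∧ c = 5 ∧ k = 2 ∧ j = 1 ∧ z = 3) ∨
      (b = 3 ∧ c = 5 ∧ k = 4 ∧ j = 1 ∧ z = 2) ∨ (b = 7 ∧ c = 3 ∧ k = 5 ∧ j = 1 ∧ z = 4) := by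
  rcases Nat.even_or_odd' z with ⟨w, rfl | hz1⟩
  · rcases even_y_even_z hb hc hbodd hcodd hj hsol with h | h <;> omega
  · have hsq : ∀ q : ℕ, q.Prime → b ^ (2 * j) = q ^ 2 → b = q ∧ j = 1 := by
      intro q hq h
      rw [mul_comm, pow_mul] at h
      exact (Nat.Prime.pow_eq_iff hq).mp (Nat.pow_left_injective two_ne_zero h)
    rcases even_y_odd_z hb hc hbodd hcodd hbc hk ⟨w, hz1⟩ hsol with
      h | ⟨h, ⟨rfl, rfl⟩ | ⟨rfl, rfl⟩⟩
    · exact Or.inl h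
    · rw [h] at hsol
      have := hsq 5 (by norm_num) (by omega)
      omega
    · rw [h] at hsol
      have := hsq 11 (by norm_num) (by omega)
      omega

/-- There is at most one solution with `y` even. -/
lemma even_y_unique {b c k j₁ z₁ j₂ z₂ : ℕ} (hb : b.Prime) (hc : c.Prime) (hbodd : Odd b)
    (hcodd : Odd c) (hbc : b ≠ c) (hk : 0 < k) (hj₁ : 0 < j₁) (hz₁ : 0 < z₁) (hj₂ : 0 < j₂)
    (hz₂ : 0 < z₂) (h₁ : c ^ z₁ = b ^ (2 * j₁) + 2 ^ k) (h₂ : c ^ z₂ = b ^ (2 * j₂) + 2 ^ k) :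
    z₁ = z₂ := by
  have hlarge : ∀ j z, 0 < j → c ^ z = b ^ (2 * j) + 2 ^ k → z = 1 → b ^ 2 < c := by
    rintro j z hj h rfl
    have h3 : b ^ 2 ≤ b ^ (2 * j) := Nat.pow_le_pow_right hb.pos (by omega)
    have := Nat.two_pow_pos k
    rw [pow_one] at h
    omega
  have g₁ := hlarge j₁ z₁ hj₁ h₁
  have g₂ := hlarge j₂ z₂ hj₂ h₂
  rcases even_y_cases hb hc hbodd hcodd hbc hk hj₁ hz₁ h₁ with
    e₁ | ⟨rfl, rfl, rfl, e₁, e₁'⟩ | ⟨rfl, rfl, rfl, e₁, e₁'⟩ | ⟨rfl, rfl, rfl, e₁, e₁'⟩ |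
    ⟨rfl, rfl, rfl, e₁, e₁'⟩ <;>
  rcases even_y_cases hb hc hbodd hcodd hbc hk hj₂ hz₂ h₂ with
    e₂ | ⟨e₂, e₃, e₄, e₅, e₆⟩ | ⟨e₂, e₃, e₄, e₅, e₆⟩ | ⟨e₂, e₃, e₄, e₅, e₆⟩ |
    ⟨e₂, e₃, e₄, e₅, e₆⟩ <;> first | omega | (subst e₂ e₃; omega)

/-! ### Counting quotients of short vectors -/

/-- A shortest vector of the lattice `x ≡ r y (mod c ^ i)`. By minimality `y` is invertible modulo
`m`, so that the vector determines a square root `s` of `-D` modulo `m`. -/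
lemma exists_short {D c i : ℕ} (hc : c.Prime) (hD : 0 < D) (hDc : 4 * D < c ^ 2) {r : ℤ}
    (hr : (c : ℤ) ^ i ∣ r ^ 2 + D) :
    ∃ (x y : ℤ) (m s : ℕ), 0 < m ∧ m ^ 2 ≤ 4 * D ∧ s < m ∧ (c : ℤ) ^ i ∣ x - r * y ∧
      x ^ 2 + D * y ^ 2 = m * c ^ i ∧ (m : ℤ) ∣ x - s * y ∧ (m : ℤ) ∣ s ^ 2 + D := by
  classical
  have hex : ∃ m : ℕ, 0 < m ∧ ∃ x y : ℤ, m ^ 2 ≤ 4 * D ∧ (c : ℤ) ^ i ∣ x - r * y ∧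
      x ^ 2 + D * y ^ 2 = m * c ^ i := by
    obtain ⟨x, y, m, h0, h1, h2, h3⟩ := thue (n := c ^ i) (pow_pos hc.pos i) hD
      (by push_cast; exact hr)
    push_cast at h2 h3
    exact ⟨m, h0, x, y, h1, h2, h3⟩
  obtain ⟨hm0, x, y, hmD, hxy, hnorm⟩ := Nat.find_spec hex
  have hmin := fun m' => Nat.find_min hex (m := m')
  generalize Nat.find hex = m at *
  have hmc : m < c := lt_of_pow_lt_pow_left₀ 2 (Nat.zero_le _) (by omega)
  have hcop : IsCoprime y (m : ℤ) := by
    rw [Int.isCoprime_iff_gcd_eq_one]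
    by_contra hne
    obtain ⟨g, hg, hgd⟩ := Nat.exists_prime_and_dvd hne
    have hgZ : Prime (g : ℤ) := Nat.prime_iff_prime_int.mp hg
    have hgy : (g : ℤ) ∣ y := (Int.natCast_dvd_natCast.mpr hgd).trans (Int.gcd_dvd_left ..)
    have hgm : (g : ℤ) ∣ m := (Int.natCast_dvd_natCast.mpr hgd).trans (Int.gcd_dvd_right ..)
    have hgx : (g : ℤ) ∣ x := by
      refine hgZ.dvd_of_dvd_pow (n := 2) ?_
      have h1 : x ^ 2 = m * c ^ i - D * y * y := by rw [← hnorm]; ring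
      rw [h1]
      exact dvd_sub (hgm.mul_right _) (hgy.mul_left _)
    have hgc : IsCoprime (g : ℤ) ((c : ℤ) ^ i) := by
      apply IsCoprime.pow_right
      rw [Nat.isCoprime_iff_coprime, Nat.coprime_primes hg hc]
      have := Nat.le_of_dvd hm0 (by exact_mod_cast hgm)
      omega
    obtain ⟨x', rfl⟩ := hgx
    obtain ⟨y', rfl⟩ := hgy
    have h1 : (c : ℤ) ^ i ∣ x' - r * y' := by
      refine hgc.symm.dvd_of_dvd_mul_left ?_
      have h2 : (g : ℤ) * (x' - r * y') = g * x' - r * (g * y') := by ring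
      rw [h2]
      exact hxy
    have h2 : (c : ℤ) ^ i ∣ x' ^ 2 + D * y' ^ 2 := by
      have h3 : x' ^ 2 + D * y' ^ 2 = (x' - r * y') * (x' + r * y') + (r ^ 2 + D) * y' ^ 2 := by
        ring
      rw [h3]
      exact dvd_add (h1.mul_right _) (hr.mul_right _)
    obtain ⟨m', hm'⟩ := h2
    have hcpos : (0 : ℤ) < (c : ℤ) ^ i := by have := hc.pos; positivity
    have hmm' : (m : ℤ) = g ^ 2 * m' := by
      have h4 : (m : ℤ) * c ^ i = (g ^ 2 * m') * c ^ i := by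
        rw [← hnorm]; linear_combination (g : ℤ) ^ 2 * hm'
      exact mul_right_cancel₀ hcpos.ne' h4
    have hm'0 : 0 < m' := by
      have : (0 : ℤ) < g ^ 2 * m' := by rw [← hmm']; exact_mod_cast hm0
      exact pos_of_mul_pos_right this (by positivity)
    lift m' to ℕ using hm'0.le
    have hmm : m = g ^ 2 * m' := by exact_mod_cast hmm'
    have hlt : m' < m := by
      have h5 : 2 ^ 2 ≤ g ^ 2 := Nat.pow_le_pow_left hg.two_le 2
      have h6 : 0 < m' := by exact_mod_cast hm'0
      nlinarith
    refine hmin m' hlt ⟨by exact_mod_cast hm'0, x', y', ?_, h1, by rw [hm']; ring⟩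
    exact (Nat.pow_le_pow_left hlt.le 2).trans hmD
  obtain ⟨a, e, hae⟩ := hcop
  have hmZ : (0 : ℤ) < m := by exact_mod_cast hm0
  obtain ⟨s, hs⟩ := Int.eq_ofNat_of_zero_le (Int.emod_nonneg (x * a) hmZ.ne')
  have hsm : s < m := by
    have := Int.emod_lt_of_pos (x * a) hmZ
    rw [hs] at this
    exact_mod_cast this
  have hxs : (m : ℤ) ∣ x * a - s := by
    rw [← hs]; exact Int.dvd_self_sub_emod
  have h1 : (m : ℤ) ∣ x - s * y := by
    have : x - s * y = m * (x * e) + (x * a - s) * y := by linear_combination (-x) * hae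
    rw [this]
    exact dvd_add (dvd_mul_right _ _) (hxs.mul_right _)
  refine ⟨x, y, m, s, hm0, hmD, hsm, hxy, hnorm, h1, ?_⟩
  have hcop : IsCoprime (m : ℤ) (y ^ 2) := IsCoprime.pow_right ⟨e, a, by linarith⟩
  refine hcop.dvd_of_dvd_mul_right ?_
  have : (s ^ 2 + D) * y ^ 2 = m * c ^ i - (x - s * y) * (x + s * y) := by rw [← hnorm]; ring
  rw [this]
  exact dvd_sub (dvd_mul_right _ _) (h1.mul_right _)

/-- If the shortest vectors for two exponents `i < j` give the same root `s` of `-D` modulo the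
same `m`, their quotient represents `c ^ (j - i)` by the principal form. -/
lemma exists_quotient {D c i n m s : ℕ} (hc : c.Prime) (hm : 0 < m) (hmc : m < c) {r x y x' y' : ℤ}
    (hr : (c : ℤ) ^ (i + n) ∣ r ^ 2 + D) (hs : (m : ℤ) ∣ s ^ 2 + D)
    (h₁ : (c : ℤ) ^ i ∣ x - r * y) (h₂ : x ^ 2 + D * y ^ 2 = m * c ^ i) (h₃ : (m : ℤ) ∣ x - s * y)
    (h₁' : (c : ℤ) ^ (i + n) ∣ x' - r * y') (h₂' : x' ^ 2 + D * y' ^ 2 = m * c ^ (i + n))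
    (h₃' : (m : ℤ) ∣ x' - s * y') :
    ∃ p q : ℤ, p ^ 2 + D * q ^ 2 = c ^ n ∧ (c : ℤ) ^ n ∣ p - r * q := by
  have hcpos : (0 : ℤ) < c := by exact_mod_cast hc.pos
  have hmpos : (0 : ℤ) < m := by exact_mod_cast hm
  have hcop : IsCoprime (m : ℤ) (c : ℤ) := by
    rw [Nat.isCoprime_iff_coprime]
    exact (Nat.coprime_of_lt_prime hm.ne' hmc hc).symm
  have hin : (c : ℤ) ^ i ∣ (c : ℤ) ^ (i + n) := pow_dvd_pow _ (Nat.le_add_right _ _)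
  have hP : ∀ N t : ℤ, N ∣ t ^ 2 + D → N ∣ x - t * y → N ∣ x' - t * y' →
      N ∣ x * x' + D * y * y' := by
    intro N t h1 h2 h3
    have : x * x' + D * y * y' = x * (x' - t * y') + (x - t * y) * (t * y') +
        (t ^ 2 + D) * (y * y') := by ring
    rw [this]
    exact dvd_add (dvd_add (h3.mul_left _) (h2.mul_right _)) (h1.mul_right _)
  have hQ : ∀ N t : ℤ, N ∣ x - t * y → N ∣ x' - t * y' → N ∣ y' * x - x' * y := by
    intro N t h2 h3
    have : y' * x - x' * y = y' * (x - t * y) - (x' - t * y') * y := by ring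
    rw [this]
    exact dvd_sub (h2.mul_left _) (h3.mul_right _)
  have hcop_i : IsCoprime (m : ℤ) ((c : ℤ) ^ i) := hcop.pow_right
  obtain ⟨p, hp⟩ := hcop_i.mul_dvd (hP _ _ hs h₃ h₃')
    (hP _ _ (hin.trans hr) h₁ (hin.trans h₁'))
  obtain ⟨q, hq⟩ := hcop_i.mul_dvd (hQ _ _ h₃ h₃') (hQ _ _ h₁ (hin.trans h₁'))
  refine ⟨p, q, ?_, ?_⟩
  · have h0 : (m * (c : ℤ) ^ i) ^ 2 ≠ 0 := by positivity
    refine mul_left_cancel₀ h0 ?_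
    calc (m * (c : ℤ) ^ i) ^ 2 * (p ^ 2 + D * q ^ 2)
        = (m * c ^ i * p) ^ 2 + D * (m * c ^ i * q) ^ 2 := by ring
      _ = (x ^ 2 + D * y ^ 2) * (x' ^ 2 + D * y' ^ 2) := by rw [← hp, ← hq]; ring
      _ = (m * (c : ℤ) ^ i) ^ 2 * c ^ n := by rw [h₂, h₂']; ring
  · have h0 : (c : ℤ) ^ i ≠ 0 := by positivity
    have h4 : (c : ℤ) ^ i * c ^ n ∣ c ^ i * (m * (p - r * q)) := by
      rw [← pow_add]
      have : c ^ i * (m * (p - r * q)) = (x + r * y) * (x' - r * y') + (r ^ 2 + D) * (y * y') := by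
        linear_combination (-1 : ℤ) * hp + r * hq
      rw [this]
      exact dvd_add (h₁'.mul_left _) (hr.mul_right _)
    have h5 := (mul_dvd_mul_iff_left h0).mp h4
    exact (hcop.symm.pow_left).dvd_of_dvd_mul_left h5

/-- The number of pairs `(m, s)` with `s < m ≤ M` bounds the exponent `z` in a solution with `y`
odd: a coincidence among the pairs attached to the exponents `1, …, z` would lead to a smaller
represented exponent. -/
lemma exponent_bound {A b c k h l z M : ℕ} (hb : b.Prime) (hc : c.Prime) (hbodd : Odd b)
    (hcodd : Odd c) (hbc : b ≠ c) (hk : 0 < k) (hA : A = 1 ∨ A = 2)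
    (hAk : A * (2 ^ h) ^ 2 = 2 ^ k) (hsol : c ^ z = b ^ (2 * l + 1) + 2 ^ k)
    (hDc : 4 * (A * b) < c ^ 2) (hM : 4 * (A * b) < (M + 1) ^ 2) : 2 * z ≤ M * (M + 1) := by
  by_contra hlt
  have hcZ : Prime (c : ℤ) := Nat.prime_iff_prime_int.mp hc
  have hcpos : (0 : ℤ) < c := by exact_mod_cast hc.pos
  have hbodd' : Odd (b : ℤ) := by exact_mod_cast hbodd
  have hcodd' : Odd (c : ℤ) := by exact_mod_cast hcodd
  have hA' : (A : ℤ) = 1 ∨ (A : ℤ) = 2 := by exact_mod_cast hA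
  have hAk' : (A : ℤ) * (2 ^ h) ^ 2 = 2 ^ k := by exact_mod_cast hAk
  have hz : 0 < z := by
    by_contra h0
    have : z = 0 := by omega
    rw [this, pow_zero] at hsol
    have h1 := Nat.two_pow_pos k
    have h2 := Nat.pow_pos (n := 2 * l + 1) hb.pos
    omega
  have hmin := exponent_minimal hb hc hbodd hcodd hbc hA' hAk' hz hsol
  have hsolZ : (A : ℤ) * (2 ^ h) ^ 2 + b * ((b : ℤ) ^ l) ^ 2 = (c : ℤ) ^ z := by
    rw [hAk']
    have : (c : ℤ) ^ z = b ^ (2 * l + 1) + 2 ^ k := by exact_mod_cast hsol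
    rw [this]; ring
  have hAX : Even ((A : ℤ) * 2 ^ h) := by
    have h1 : Even ((A : ℤ) * (2 ^ h) ^ 2) := by
      rw [hAk']; exact even_two.pow_of_ne_zero hk.ne'
    rcases Int.even_mul.mp h1 with h2 | h2
    · exact h2.mul_right _
    · exact (Int.even_pow.mp h2).1.mul_left _
  have hYodd : Odd ((b : ℤ) ^ l) := hbodd'.pow
  have hcopY : IsCoprime ((b : ℤ) ^ l) (c : ℤ) := by
    apply IsCoprime.pow_left
    rw [Nat.isCoprime_iff_coprime, Nat.coprime_primes hb hc]
    exact hbc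
  generalize (2 : ℤ) ^ h = X at *
  generalize (b : ℤ) ^ l = Y at *
  obtain ⟨a, e, hae⟩ := hcopY.pow_right (n := z)
  obtain ⟨r, hrY⟩ : ∃ r : ℤ, (c : ℤ) ^ z ∣ r * Y - A * X :=
    ⟨a * A * X, ⟨-(A * X * e), by linear_combination ((A : ℤ) * X) * hae⟩⟩
  have hr : (c : ℤ) ^ z ∣ r ^ 2 + (A * b : ℕ) := by
    have h1 : IsCoprime ((c : ℤ) ^ z) (Y ^ 2) := (hcopY.pow_right (n := z)).symm.pow_right
    refine h1.dvd_of_dvd_mul_right ?_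
    have : (r ^ 2 + (A * b : ℕ)) * Y ^ 2 = (r * Y - A * X) * (r * Y + A * X) + c ^ z * A := by
      rw [← hsolZ]; push_cast; ring
    rw [this]
    exact dvd_add (hrY.mul_right _) (dvd_mul_right _ _)
  have hD0 : 0 < A * b := Nat.mul_pos (by omega) hb.pos
  have hshort : ∀ i : ℕ, i ≤ z → ∃ (m s : ℕ) (x y : ℤ), 0 < m ∧ m ^ 2 ≤ 4 * (A * b) ∧ s < m ∧
      (c : ℤ) ^ i ∣ x - r * y ∧ x ^ 2 + (A * b : ℕ) * y ^ 2 = m * c ^ i ∧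
      (m : ℤ) ∣ x - s * y ∧ (m : ℤ) ∣ s ^ 2 + (A * b : ℕ) := by
    intro i hi
    obtain ⟨x, y, m, s, h⟩ := exists_short hc hD0 hDc ((pow_dvd_pow _ hi).trans hr)
    exact ⟨m, s, x, y, h⟩
  choose! m s x y hm0 hmD hsm hxy hnorm hxs hsD using hshort
  have hcard : ((Finset.range (M + 1)).sigma (fun m => Finset.range m)).card <
      (Finset.Icc 1 z).card := by
    rw [Finset.card_sigma, Nat.card_Icc]
    simp only [Finset.card_range]
    have := Finset.sum_range_id_mul_two (M + 1)
    rw [Nat.add_sub_cancel, mul_comm (M + 1)] at this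
    omega
  obtain ⟨i, hi, j, hj, hij, heq⟩ := Finset.exists_ne_map_eq_of_card_lt_of_maps_to hcard
    (f := fun i => (⟨m i, s i⟩ : Σ _ : ℕ, ℕ)) (by
      intro i hi
      have hi' := Finset.mem_Icc.mp hi
      have h1 : m i < M + 1 :=
        lt_of_pow_lt_pow_left₀ 2 (Nat.zero_le _) ((hmD i hi'.2).trans_lt hM)
      exact Finset.mem_sigma.mpr ⟨Finset.mem_range.mpr h1, Finset.mem_range.mpr (hsm i hi'.2)⟩)
  rw [Finset.mem_Icc] at hi hj
  simp only [Sigma.mk.injEq, heq_eq_eq] at heq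
  wlog hlt' : i < j generalizing i j
  · exact this j hj i hi hij.symm ⟨heq.1.symm, heq.2.symm⟩ (by omega)
  obtain ⟨n, rfl⟩ : ∃ n, j = i + n := ⟨j - i, by omega⟩
  have hn : 0 < n := by omega
  have hnz : n < z := by omega
  have hmc : m i < c := lt_of_pow_lt_pow_left₀ 2 (Nat.zero_le _) ((hmD i hi.2).trans_lt hDc)
  have hnorm' := hnorm (i + n) hj.2
  have hxs' := hxs (i + n) hj.2
  rw [← heq.1] at hnorm' hxs'
  rw [← heq.2] at hxs'
  obtain ⟨p, q, hpq, hpr⟩ := exists_quotient hc (hm0 i hi.2) hmc ((pow_dvd_pow _ hj.2).trans hr)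
    (hsD i hi.2) (hxy i hi.2) (hnorm i hi.2) (hxs i hi.2) (hxy _ hj.2) hnorm' hxs'
  push_cast at hpq
  have hcn : Odd ((c : ℤ) ^ n) := hcodd'.pow
  rcases Int.even_or_odd p with hp | hp
  · -- `D` is odd, so `A = 1` and `(p, q)` itself represents `c ^ n`
    have h1 : Odd ((A : ℤ) * b * q ^ 2) := by
      rw [← hpq] at hcn
      exact (Int.odd_add'.mp hcn).mpr (hp.pow_of_ne_zero two_ne_zero)
    have h2 := Int.odd_mul.mp h1
    have hq : Odd q := (Int.odd_pow.mp h2.2).resolve_right two_ne_zero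
    have hA1 : (A : ℤ) = 1 := by
      rcases hA' with h3 | h3
      · exact h3
      · rw [h3] at h2
        exact absurd (Int.odd_mul.mp h2.1).1 (by decide)
    refine hmin n hn hnz p q hq ?_
    rw [← hpq, hA1]; ring
  · have hzn : (c : ℤ) ^ n ∣ (c : ℤ) ^ z := pow_dvd_pow _ hnz.le
    have hu : (c : ℤ) ^ n ∣ X * p + b * Y * q := by
      refine ((hcopY.pow_right (n := n)).symm).dvd_of_dvd_mul_left ?_
      have : Y * (X * p + b * Y * q) = X * Y * (p - r * q) + X * q * (r * Y - A * X) +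
          c ^ z * q := by rw [← hsolZ]; ring
      rw [this]
      exact dvd_add (dvd_add (hpr.mul_left _) ((hzn.trans hrY).mul_left _)) (hzn.mul_right _)
    have hv : (c : ℤ) ^ n ∣ Y * p - A * X * q := by
      have : Y * p - A * X * q = Y * (p - r * q) + q * (r * Y - A * X) := by ring
      rw [this]
      exact dvd_add (hpr.mul_left _) ((hzn.trans hrY).mul_left _)
    obtain ⟨u', hu'⟩ := hu
    obtain ⟨v', hv'⟩ := hv
    have hvodd : Odd v' := by
      have h1 : Odd (Y * p - A * X * q) := (hYodd.mul hp).sub_even (hAX.mul_right _)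
      rw [hv'] at h1
      exact (Int.odd_mul.mp h1).2
    refine hmin (z - n) (by omega) (by omega) u' v' hvodd ?_
    have h0 : ((c : ℤ) ^ n) ^ 2 ≠ 0 := by positivity
    refine mul_left_cancel₀ h0 ?_
    calc ((c : ℤ) ^ n) ^ 2 * (A * u' ^ 2 + b * v' ^ 2)
        = A * (c ^ n * u') ^ 2 + b * (c ^ n * v') ^ 2 := by ring
      _ = (A * X ^ 2 + b * Y ^ 2) * (p ^ 2 + A * b * q ^ 2) := by rw [← hu', ← hv']; ring
      _ = c ^ n * c ^ (n + (z - n)) := by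
        rw [hsolZ, hpq, Nat.add_sub_cancel' hnz.le]; ring
      _ = ((c : ℤ) ^ n) ^ 2 * c ^ (z - n) := by rw [pow_add]; ring

/-! ### Solutions of different parity -/

/-- `2 ^ (i + 1) ∣ b ^ 2 - 1` whenever `2 ^ i ∣ b - 1`, and comparing the two equations modulo
`2 ^ (i + 1)` lifts the congruence from `b ^ 2` to `b`. -/
lemma two_pow_dvd {b c k j l z : ℕ} (hbodd : Odd b) (h₁ : c = b ^ (2 * j) + 2 ^ k)
    (h₂ : c ^ z = b ^ (2 * l + 1) + 2 ^ k) (i : ℕ) (hi : i ≤ k) : (2 : ℤ) ^ i ∣ b - 1 := by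
  induction i with
  | zero => simp
  | succ i ih =>
    have hb1 : (2 : ℤ) ∣ b + 1 := by
      have : Odd (b : ℤ) := by exact_mod_cast hbodd
      exact (this.add_odd odd_one).two_dvd
    have hsq : (b : ℤ) ^ 2 ≡ 1 [ZMOD 2 ^ (i + 1)] := by
      refine (Int.modEq_iff_dvd.mpr ?_).symm
      have : (b : ℤ) ^ 2 - 1 = (b - 1) * (b + 1) := by ring
      rw [this, pow_succ]
      exact mul_dvd_mul (ih (by omega)) hb1
    have hk0 : (2 : ℤ) ^ k ≡ 0 [ZMOD 2 ^ (i + 1)] :=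
      Int.modEq_zero_iff_dvd.mpr (pow_dvd_pow 2 hi)
    have hc : (c : ℤ) ≡ 1 [ZMOD 2 ^ (i + 1)] := by
      have : (c : ℤ) = ((b : ℤ) ^ 2) ^ j + 2 ^ k := by rw [← pow_mul]; exact_mod_cast h₁
      rw [this]
      simpa using (hsq.pow j).add hk0
    have hb : ((b : ℤ) ^ 2) ^ l * b + 2 ^ k ≡ b [ZMOD 2 ^ (i + 1)] := by
      simpa using ((hsq.pow l).mul_right (b : ℤ)).add hk0
    have hcz : (c : ℤ) ^ z = ((b : ℤ) ^ 2) ^ l * b + 2 ^ k := by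
      rw [← pow_mul, ← pow_succ]; exact_mod_cast h₂
    have h3 : (b : ℤ) ≡ 1 [ZMOD 2 ^ (i + 1)] := by
      rw [← hcz] at hb
      simpa using hb.symm.trans (hc.pow z)
    exact h3.symm.dvd

lemma pow_mod_eight {n r : ℕ} (hn : n % 8 = r) (hr : r % 2 = 1) (m : ℕ) :
    n ^ (2 * m) % 8 = 1 ∧ n ^ (2 * m + 1) % 8 = r := by
  have h1 : n ^ (2 * m) % 8 = 1 := by
    have h2 : n ^ 2 % 8 = 1 := by
      have : r < 8 := by omega
      rw [Nat.pow_mod, hn]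
      interval_cases r <;> simp_all
    rw [pow_mul, Nat.pow_mod, h2, one_pow]
    rfl
  refine ⟨h1, ?_⟩
  rw [pow_succ, Nat.mul_mod, h1, hn]
  omega

/-- The small values of `b` are excluded by congruences modulo `3` and `8`. -/
lemma seventeen_le {b c k j l z : ℕ} (hb : b.Prime) (hc : c.Prime) (hbodd : Odd b) (hk : 0 < k)
    (hj : 0 < j) (h₁ : c = b ^ (2 * j) + 2 ^ k) (h₂ : c ^ z = b ^ (2 * l + 1) + 2 ^ k)
    (hkb : 2 ^ k ∣ b - 1) : 17 ≤ b := by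
  by_contra hlt
  have hb3 : 3 ≤ b := by
    have := hb.two_le
    have : b ≠ 2 := by rintro rfl; exact absurd hbodd (by decide)
    omega
  have hbig : 9 < c := by
    have h3 : 3 ^ 2 ≤ b ^ 2 := Nat.pow_le_pow_left hb3 2
    have h4 : b ^ 2 ≤ b ^ (2 * j) := Nat.pow_le_pow_right hb.pos (by omega)
    have := Nat.two_pow_pos k
    omega
  have hc3 : ¬ 3 ∣ c := by
    intro h
    have := (Nat.prime_dvd_prime_iff_eq Nat.prime_three hc).mp h
    omega
  have hk4 : k < 4 := by
    have h3 := Nat.le_of_dvd (by omega) hkb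
    by_contra h
    have : 2 ^ 4 ≤ 2 ^ k := Nat.pow_le_pow_right two_pos (by omega)
    omega
  have hmod3 : ∀ n m : ℕ, n % 3 = 1 → n ^ m % 3 = 1 := by
    intro n m h
    rw [Nat.pow_mod, h, one_pow]
    rfl
  have hz := Nat.even_or_odd' z
  obtain ⟨m, hm⟩ := hz
  have hcodd : c % 2 = 1 := by
    rcases hc.eq_two_or_odd with h | h <;> omega
  have hc8 := pow_mod_eight (rfl : c % 8 = c % 8) (by omega) m
  have hcz : c ^ z % 8 = 1 ∨ c ^ z % 8 = c % 8 := by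
    rcases hm with h | h <;> rw [h] <;> omega
  have hbo : b % 2 = 1 := Nat.odd_iff.mp hbodd
  have hb8 := pow_mod_eight (rfl : b % 8 = b % 8) (by omega) j
  have hb8' := pow_mod_eight (rfl : b % 8 = b % 8) (by omega) l
  have key : (k = 1 ∧ (b % 8 = 3 ∨ b % 8 = 5)) ∨ (k = 1 ∧ b = 7) ∨ (k = 2 ∧ b = 5) ∨
      (k = 2 ∧ b = 13) := by
    clear hb8 hb8' hc8 hcz hm h₁ h₂
    interval_cases k <;> interval_cases b <;> revert hb hkb hbo <;> norm_num
  rcases key with ⟨rfl, h | h⟩ | ⟨rfl, rfl⟩ | ⟨rfl, rfl⟩ | ⟨rfl, rfl⟩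
  · omega
  · omega
  · have := hmod3 7 (2 * j) rfl
    omega
  · have h3 := hmod3 25 l rfl
    have h4 : 5 ^ (2 * l + 1) = 25 ^ l * 5 := by rw [pow_succ, pow_mul]; norm_num
    exact hc3 (Nat.prime_three.dvd_of_dvd_pow (show 3 ∣ c ^ z by omega))
  · have h3 := hmod3 13 (2 * j) rfl
    have h4 := hmod3 13 (2 * l + 1) rfl
    rcases hm with h | h
    · have h5 : c ^ 2 % 3 = 1 := by
        have h6 : c % 3 = 2 := by omega
        rw [Nat.pow_mod, h6]
      have h6 := hmod3 (c ^ 2) m h5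
      rw [← pow_mul, ← h] at h6
      omega
    · rw [h] at h₂
      omega

lemma exp_nine_quarters_lt : Real.exp (9 / 4) < 17 := by
  by_contra! h
  have h1 : (17 : ℝ) ^ 4 ≤ Real.exp (9 / 4) ^ 4 := pow_le_pow_left₀ (by norm_num) h 4
  have h2 : Real.exp (9 / 4) ^ 4 = Real.exp 1 ^ 9 := by
    rw [← Real.exp_nat_mul, ← Real.exp_nat_mul]; norm_num
  have h3 : Real.exp 1 ^ 9 ≤ 3 ^ 9 :=
    pow_le_pow_left₀ (Real.exp_pos 1).le (Real.exp_one_lt_three.le) 9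
  rw [h2] at h1
  norm_num at h1 h3
  linarith

/-- Since `c` is so close to a power of `b`, the exponent `z` of a second power of `c` close to a
power of `b` must be large. -/
lemma large_exponent {b c k j l z : ℕ} (hb : 17 ≤ b) (hj : 0 < j) (hz : 0 < z)
    (h₁ : c = b ^ (2 * j) + 2 ^ k) (h₂ : c ^ z = b ^ (2 * l + 1) + 2 ^ k) :
    9 * b ^ 2 < 4 * z * 2 ^ k := by
  by_contra! hle
  have hT := Nat.two_pow_pos k
  have hB : 1 < b ^ (2 * j) := Nat.one_lt_pow (by omega) (by omega)
  have hlt : b ^ (2 * j * z) < b ^ (2 * l + 1) := by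
    rw [pow_mul]
    rcases Nat.lt_or_ge z 2 with h | h
    · obtain rfl : z = 1 := by omega
      rw [pow_one] at h₂ ⊢
      have h3 : b ^ (2 * j) = b ^ (2 * l + 1) := by omega
      have := Nat.pow_right_injective (by omega : 2 ≤ b) h3
      omega
    · obtain ⟨w, rfl⟩ : ∃ w, z = w + 1 := ⟨z - 1, by omega⟩
      have h3 : (b ^ (2 * j)) ^ w ≤ c ^ w := Nat.pow_le_pow_left (by omega) w
      have h4 : 1 < (b ^ (2 * j)) ^ w := Nat.one_lt_pow (by omega) hB
      rw [pow_succ] at h₂ ⊢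
      generalize b ^ (2 * j) = B at *
      subst h₁
      nlinarith [Nat.mul_le_mul_right (B + 2 ^ k) h3, Nat.mul_lt_mul_of_pos_right h4 hT]
  have hy : 2 * j * z < 2 * l + 1 := (Nat.pow_lt_pow_iff_right (by omega)).mp hlt
  have hbR : (17 : ℝ) ≤ b := by exact_mod_cast hb
  have hBR : (0 : ℝ) < (b : ℝ) ^ (2 * j) := by positivity
  have hcexp : (c : ℝ) ≤ (b : ℝ) ^ (2 * j) * Real.exp (2 ^ k / (b : ℝ) ^ (2 * j)) := by
    have h3 := Real.add_one_le_exp (2 ^ k / (b : ℝ) ^ (2 * j))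
    have h4 : (c : ℝ) = (b : ℝ) ^ (2 * j) * (2 ^ k / (b : ℝ) ^ (2 * j) + 1) := by
      rw [h₁]; push_cast; field_simp; ring
    rw [h4]
    gcongr
  have hexp : (z : ℝ) * (2 ^ k / (b : ℝ) ^ (2 * j)) ≤ 9 / 4 := by
    have h3 : (b : ℝ) ^ 2 ≤ (b : ℝ) ^ (2 * j) := pow_le_pow_right₀ (by linarith) (by omega)
    have h4 : 4 * (z : ℝ) * 2 ^ k ≤ 9 * b ^ 2 := by exact_mod_cast hle
    rw [← mul_div_assoc, div_le_iff₀ hBR]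
    linarith
  have h3 : (c : ℝ) ^ z < b ^ (2 * l + 1) := by
    calc (c : ℝ) ^ z ≤ ((b : ℝ) ^ (2 * j) * Real.exp (2 ^ k / (b : ℝ) ^ (2 * j))) ^ z := by
          gcongr
      _ = (b : ℝ) ^ (2 * j * z) * Real.exp (z * (2 ^ k / (b : ℝ) ^ (2 * j))) := by
          rw [mul_pow, ← pow_mul, ← Real.exp_nat_mul]
      _ ≤ (b : ℝ) ^ (2 * j * z) * Real.exp (9 / 4) := by gcongr
      _ < (b : ℝ) ^ (2 * j * z) * b := by
          have := exp_nine_quarters_lt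
          gcongr
          linarith
      _ = (b : ℝ) ^ (2 * j * z + 1) := (pow_succ _ _).symm
      _ ≤ b ^ (2 * l + 1) := pow_le_pow_right₀ (by linarith) hy
  have h4 : c ^ z < b ^ (2 * l + 1) := by exact_mod_cast h3
  omega

/-- A solution with `z = 1` and `y` even excludes solutions with `y` odd. -/
lemma not_mixed_one {b c k j l z : ℕ} (hb : b.Prime) (hc : c.Prime) (hbodd : Odd b)
    (hcodd : Odd c) (hbc : b ≠ c) (hk : 0 < k) (hj : 0 < j) (hz : 0 < z)
    (h₁ : c = b ^ (2 * j) + 2 ^ k) (h₂ : c ^ z = b ^ (2 * l + 1) + 2 ^ k) : False := by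
  have hkb : 2 ^ k ∣ b - 1 := by
    have h3 := two_pow_dvd hbodd h₁ h₂ k le_rfl
    rw [← Nat.cast_one, ← Nat.cast_sub hb.one_le] at h3
    exact_mod_cast h3
  have hb17 := seventeen_le hb hc hbodd hk hj h₁ h₂ hkb
  have hlarge := large_exponent hb17 hj hz h₁ h₂
  have hcb : b ^ 2 < c := by
    have h4 : b ^ 2 ≤ b ^ (2 * j) := Nat.pow_le_pow_right hb.pos (by omega)
    have := Nat.two_pow_pos k
    omega
  have hDc : ∀ A, A ≤ 2 → 4 * (A * b) < c ^ 2 := by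
    intro A hA
    nlinarith
  have hkle : 2 ^ k ≤ b - 1 := Nat.le_of_dvd (by omega) hkb
  rcases Nat.even_or_odd' k with ⟨h, hkh | hkh⟩
  · have hM := Nat.lt_succ_sqrt' (4 * (1 * b))
    have hM' := Nat.sqrt_le' (4 * (1 * b))
    have hbd := exponent_bound hb hc hbodd hcodd hbc hk (Or.inl rfl)
      (by rw [hkh, one_mul, ← pow_mul, mul_comm]) h₂ (hDc 1 (by norm_num)) hM
    generalize Nat.sqrt (4 * (1 * b)) = M at *
    have hMb : 2 * M ≤ b := by nlinarith
    have hz4 : 4 * z ≤ 9 * b := by nlinarith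
    have : 4 * z * 2 ^ k ≤ 9 * b * b := Nat.mul_le_mul hz4 (by omega)
    nlinarith
  · have hM := Nat.lt_succ_sqrt' (4 * (2 * b))
    have hM' := Nat.sqrt_le' (4 * (2 * b))
    have hbd := exponent_bound hb hc hbodd hcodd hbc hk (Or.inr rfl)
      (by rw [hkh, ← pow_mul, mul_comm h, pow_succ, mul_comm]) h₂ (hDc 2 le_rfl) hM
    generalize Nat.sqrt (4 * (2 * b)) = M at *
    have hMb : M ≤ b := by nlinarith
    have hz4 : 4 * z ≤ 18 * b := by nlinarith
    -- `b ≠ 2 ^ k + 1`, as `3 ∣ 2 ^ k + 1` for odd `k`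
    have h2k : 2 * 2 ^ k ≤ b := by
      obtain ⟨w, hw⟩ := hkb
      rcases w with _ | _ | w
      · omega
      · exfalso
        have h3 : 2 ^ k % 3 = 2 := by
          rw [hkh, pow_succ, pow_mul, Nat.mul_mod, Nat.pow_mod]; norm_num
        have := (Nat.prime_dvd_prime_iff_eq Nat.prime_three hb).mp (by omega)
        omega
      · have h3 : 2 ^ k * (w + 1 + 1) = 2 ^ k * w + 2 * 2 ^ k := by ring
        omega
    have : 4 * z * (2 * 2 ^ k) ≤ 18 * b * b := Nat.mul_le_mul hz4 h2k
    nlinarith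

lemma not_mixed {b c k j l z₁ z₂ : ℕ} (hb : b.Prime) (hc : c.Prime) (hbodd : Odd b)
    (hcodd : Odd c) (hbc : b ≠ c) (hk : 0 < k) (hj : 0 < j) (hz₁ : 0 < z₁) (hz₂ : 0 < z₂)
    (h₁ : c ^ z₁ = b ^ (2 * j) + 2 ^ k) (h₂ : c ^ z₂ = b ^ (2 * l + 1) + 2 ^ k) : False := by
  have hbo : b % 2 = 1 := Nat.odd_iff.mp hbodd
  have hco : c % 2 = 1 := Nat.odd_iff.mp hcodd
  have hb8 := (pow_mod_eight (rfl : b % 8 = b % 8) (by omega) l).2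
  obtain ⟨m, hm⟩ := Nat.even_or_odd' z₂
  have hc8 := pow_mod_eight (rfl : c % 8 = c % 8) (by omega) m
  have hcz : c ^ z₂ % 8 = 1 ∨ c ^ z₂ % 8 = c % 8 := by
    rcases hm with h | h <;> rw [h] <;> omega
  rcases even_y_cases hb hc hbodd hcodd hbc hk hj hz₁ h₁ with
    rfl | ⟨rfl, rfl, rfl, -, -⟩ | ⟨rfl, rfl, rfl, -, -⟩ | ⟨rfl, rfl, rfl, -, -⟩ |
    ⟨rfl, rfl, rfl, -, -⟩
  · rw [pow_one] at h₁
    exact not_mixed_one hb hc hbodd hcodd hbc hk hj hz₂ h₁ h₂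
  all_goals omega

/-! ### Conclusion -/

theorem stmt_15 (b c k : ℕ) (hb : Nat.Prime b) (hc : Nat.Prime c)
    (hbodd : Odd b) (hcodd : Odd c) (hbc : b ≠ c) (hk : 0 < k) :
    {p : ℕ × ℕ | 0 < p.1 ∧ 0 < p.2 ∧ c ^ p.2 = b ^ p.1 + 2 ^ k}.Subsingleton := by
  have hodd : ∀ l₁ l₂ z₁ z₂ : ℕ, 0 < z₁ → z₁ < z₂ → c ^ z₁ = b ^ (2 * l₁ + 1) + 2 ^ k →
      c ^ z₂ = b ^ (2 * l₂ + 1) + 2 ^ k → False := by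
    intro l₁ l₂ z₁ z₂ hz₁ hlt h₁ h₂
    obtain ⟨A, h, hA, hAk⟩ : ∃ (A : ℤ) (h : ℕ), (A = 1 ∨ A = 2) ∧ A * (2 ^ h) ^ 2 = 2 ^ k := by
      rcases Nat.even_or_odd' k with ⟨h, rfl | rfl⟩
      · exact ⟨1, h, Or.inl rfl, by ring⟩
      · exact ⟨2, h, Or.inr rfl, by ring⟩
    have hY : Odd ((b : ℤ) ^ l₁) := Odd.pow (by exact_mod_cast hbodd)
    refine exponent_minimal hb hc hbodd hcodd hbc hA hAk (hz₁.trans hlt) h₂ z₁ hz₁ hlt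
      (2 ^ h) ((b : ℤ) ^ l₁) hY ?_
    have h₁' : (c : ℤ) ^ z₁ = b ^ (2 * l₁ + 1) + 2 ^ k := by exact_mod_cast h₁
    rw [h₁', hAk]; ring
  rintro ⟨y₁, z₁⟩ ⟨hy₁, hz₁, h₁⟩ ⟨y₂, z₂⟩ ⟨hy₂, hz₂, h₂⟩
  simp only at hy₁ hz₁ h₁ hy₂ hz₂ h₂
  have hz : z₁ = z₂ := by
    obtain ⟨j₁, rfl | rfl⟩ := Nat.even_or_odd' y₁ <;>
      obtain ⟨j₂, rfl | rfl⟩ := Nat.even_or_odd' y₂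
    · exact even_y_unique hb hc hbodd hcodd hbc hk (by omega) hz₁ (by omega) hz₂ h₁ h₂
    · exact (not_mixed hb hc hbodd hcodd hbc hk (by omega) hz₁ hz₂ h₁ h₂).elim
    · exact (not_mixed hb hc hbodd hcodd hbc hk (by omega) hz₂ hz₁ h₂ h₁).elim
    · rcases lt_trichotomy z₁ z₂ with h | h | h
      · exact (hodd _ _ _ _ hz₁ h h₁ h₂).elim
      · exact h
      · exact (hodd _ _ _ _ hz₂ h h₂ h₁).elim
  subst hz
  have hy : b ^ y₁ = b ^ y₂ := by omega
  rw [Nat.pow_right_injective hb.two_le hy]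
end

section
/- (He–Togbé) Let f be a positive integer with f > 3. Then the equation f^x + (f+1)^y = (f+2)^z has no solutions (x,y,z) in positive integers. -/
/-!
Write `n = f` and `M = n + 2`, so that the equation is `n ^ x + (n + 1) ^ y = M ^ z`.
Parity forces `n` to be odd. Modulo `n + 1` we have `n ≡ -1` and `M ≡ 1`, which forces `x` to be even;
modulo `(n + 1) ^ 2` the first two terms of the binomial expansions of `n ^ x` and `M ^ z`
(`sq_dvd_one_add_pow_sub`) determine the parity of `z`: it is odd if `y = 1`, even if `y ≥ 2`.

* If `y ≥ 2`, put `n + 1 = 2 * m`, `x = 2 * X`, `z = 2 * Z`. The difference of squares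
  `M ^ (2 * Z) - n ^ (2 * X) = (2 * m) ^ y` is split into `4 * a * b` with coprime
  `a = (M ^ Z - n ^ X) / 2` and `b = (M ^ Z + n ^ X) / 2`. Modulo `2 * m` one of `a`, `b` is prime
  to `m`, hence a power of two; if it is `b`, then `a` is too large. Otherwise `a = 1`, excluded by
  a 2-adic argument (`case_one`), or `b = m ^ y` and `a = 2 ^ (y - 2)` with `m` odd, excluded by a
  further factorisation or by the Jacobi symbol `(2 / (2 * m + 1))` (`case_two`). This is
  `no_solution_even`.

* If `y = 1`, then `1 < z ≤ x`, so `n ^ z` divides `M ^ z - (n + 1)`. For `n ≥ 47` this is impossible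
  by a Padé approximation argument: there are integers `U, V` and `H > 0` with
  `2 ^ s * H = M ^ z * U + n ^ z * V` (`pade`), so that `n ^ z` divides
  `2 ^ s * H - (n + 1) * U`, an integer which is nonzero by a sign consideration and smaller than
  `n ^ z` in absolute value (`pade_contra`, `no_solution_one_large`). The finitely many remaining `n`
  are excluded by congruences (`no_solution_one_small`).
-/

/-! ### Complete homogeneous symmetric polynomials in two repeated variables -/

/-- The complete homogeneous symmetric polynomial of degree `l` evaluated at `a` copies of `M` and
`b` copies of `n`, encoded as the coefficient of `X ^ l` in `(1 - M X)⁻ᵃ (1 - n X)⁻ᵇ`. -/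
noncomputable def hsym (M n : ℤ) (a b l : ℕ) : ℤ :=
  PowerSeries.coeff l ((PowerSeries.mk fun i => M ^ i) ^ a * (PowerSeries.mk fun i => n ^ i) ^ b)

theorem hsym_comm (M n : ℤ) (a b l : ℕ) : hsym M n a b l = hsym n M b a l := by
  rw [hsym, hsym, mul_comm]

/-- The geometric series `G = ∑ Mⁱ Xⁱ` satisfies `G = 1 + M X G`. -/
theorem mk_pow_eq (M : ℤ) : (PowerSeries.mk fun i => M ^ i) =
    1 + PowerSeries.C M * (PowerSeries.X * PowerSeries.mk fun i => M ^ i) := by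
  ext i
  cases i with
  | zero => simp
  | succ i =>
    rw [map_add, PowerSeries.coeff_C_mul, PowerSeries.coeff_succ_X_mul]
    simp [PowerSeries.coeff_one, pow_succ, mul_comm]

theorem hsym_succ_left (M n : ℤ) (a b l : ℕ) :
    hsym M n (a + 1) b (l + 1) = M * hsym M n (a + 1) b l + hsym M n a b (l + 1) := by
  have key : (PowerSeries.mk fun i => M ^ i) ^ (a + 1) * (PowerSeries.mk fun i => n ^ i) ^ b =
      PowerSeries.C M * (PowerSeries.X * ((PowerSeries.mk fun i => M ^ i) ^ (a + 1) *
        (PowerSeries.mk fun i => n ^ i) ^ b)) +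
      (PowerSeries.mk fun i => M ^ i) ^ a * (PowerSeries.mk fun i => n ^ i) ^ b := by
    linear_combination (PowerSeries.mk fun i => M ^ i) ^ a * (PowerSeries.mk fun i => n ^ i) ^ b *
      mk_pow_eq M
  have h := congrArg (PowerSeries.coeff (l + 1)) key
  rw [map_add, PowerSeries.coeff_C_mul, PowerSeries.coeff_succ_X_mul] at h
  exact h

theorem hsym_succ_right (M n : ℤ) (a b l : ℕ) :
    hsym M n a (b + 1) (l + 1) = n * hsym M n a (b + 1) l + hsym M n a b (l + 1) := by
  simpa only [hsym_comm M n] using hsym_succ_left n M b a l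

/-- The divided-difference identity that trades one copy of each variable for a factor `M - n`;
it drives the induction in `pade`. -/
theorem hsym_step (M n : ℤ) (a b l : ℕ) :
    (M - n) * hsym M n (a + 1) (b + 1) l = hsym M n (a + 1) b (l + 1) - hsym M n a (b + 1) (l + 1) := by
  linear_combination hsym_succ_right M n (a + 1) b l - hsym_succ_left M n a (b + 1) l

theorem hsym_zero (M n : ℤ) (a b : ℕ) : hsym M n a b 0 = 1 := by simp [hsym]

theorem hsym_pure (M n : ℤ) (a l : ℕ) : hsym M n (a + 1) 0 l = (l + a).choose l * M ^ l := by
  induction a generalizing l with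
  | zero => simp [hsym]
  | succ a iha =>
    induction l with
    | zero => simp [hsym_zero]
    | succ l ihl =>
      rw [hsym_succ_left, ihl, iha, show l + 1 + (a + 1) = (l + (a + 1)) + 1 by ring,
        Nat.choose_succ_succ, show l + 1 + a = l + (a + 1) by ring]
      push_cast
      ring

theorem hsym_nonneg {M n : ℤ} (hM : 0 < M) (hn : 0 < n) (a b l : ℕ) : 0 ≤ hsym M n a b l := by
  induction a generalizing l with
  | zero =>
    cases b with
    | zero => cases l <;> simp [hsym, PowerSeries.coeff_one]
    | succ b => rw [hsym_comm, hsym_pure]; positivity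
  | succ a iha =>
    induction l with
    | zero => simp [hsym_zero]
    | succ l ihl =>
      rw [hsym_succ_left]
      have := iha (l + 1)
      positivity

theorem hsym_pos {M n : ℤ} (hM : 0 < M) (hn : 0 < n) (a b l : ℕ) : 0 < hsym M n (a + 1) b l := by
  induction l with
  | zero => simp [hsym_zero]
  | succ l ihl =>
    rw [hsym_succ_left]
    have := hsym_nonneg hM hn a b (l + 1)
    positivity

/-- An upper bound obtained from `hsym_succ_left` and `hsym_succ_right` alone. The constants are such
that `(3 / 2) ^ s * (3 * M) ^ l` satisfies the resulting recursion with equality. -/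
theorem hsym_le {M n : ℤ} (hn : 0 < n) (hnM : n ≤ M) (s : ℕ) :
    ∀ a b l : ℕ, a + b = s + 1 → (hsym M n a b l : ℝ) ≤ (3 / 2) ^ s * (3 * M) ^ l := by
  have hM1 : (1 : ℝ) ≤ M := by exact_mod_cast (by linarith : 1 ≤ M)
  have hn0 : (0 : ℝ) < n := by exact_mod_cast hn
  have hnM' : (n : ℝ) ≤ M := by exact_mod_cast hnM
  induction s with
  | zero =>
    intro a b l hab
    have hpow : (M : ℝ) ^ l ≤ (3 * M) ^ l := by gcongr; linarith
    obtain ⟨rfl, rfl⟩ | ⟨rfl, rfl⟩ : (a = 1 ∧ b = 0) ∨ (a = 0 ∧ b = 1) := by omega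
    · simpa [hsym] using hpow
    · simpa [hsym] using (pow_le_pow_left₀ hn0.le hnM' l).trans hpow
  | succ s ih =>
    intro a b l hab
    induction l with
    | zero => simpa [hsym_zero] using one_le_pow₀ (n := s + 1) (by norm_num : (1 : ℝ) ≤ 3 / 2)
    | succ l ihl =>
      have hrec : (3 / 2 : ℝ) ^ (s + 1) * (3 * M) ^ (l + 1) =
          M * ((3 / 2) ^ (s + 1) * (3 * M) ^ l) + (3 / 2) ^ s * (3 * M) ^ (l + 1) := by ring
      rw [hrec]
      rcases a with _ | a
      · obtain ⟨b, rfl⟩ : ∃ c, b = c + 1 := ⟨b - 1, by omega⟩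
        rw [hsym_succ_right]
        push_cast
        have h1 := ih 0 b (l + 1) (by omega)
        gcongr
        exact_mod_cast hsym_nonneg (by linarith) hn _ _ _
      · rw [hsym_succ_left]
        push_cast
        have h1 := ih a b (l + 1) (by omega)
        gcongr

/-- The bounding function is chosen to satisfy Pascal's recursion with equality
(`4 / 5 + 1 / 5 = 1`). -/
theorem choose_le_aux (c l : ℕ) : ((l + c).choose l : ℝ) ≤ 5 ^ c * (5 / 4) ^ l := by
  induction c generalizing l with
  | zero => simpa using one_le_pow₀ (n := l) (by norm_num : (1 : ℝ) ≤ 5 / 4)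
  | succ c ihc =>
    induction l with
    | zero => simpa using one_le_pow₀ (n := c + 1) (by norm_num : (1 : ℝ) ≤ 5)
    | succ l ihl =>
      rw [show l + 1 + (c + 1) = (l + (c + 1)) + 1 by ring, Nat.choose_succ_succ]
      have h := ihc (l + 1)
      rw [show l + 1 + c = l + (c + 1) by ring] at h
      push_cast
      calc _ ≤ (5 : ℝ) ^ (c + 1) * (5 / 4) ^ l + 5 ^ c * (5 / 4) ^ (l + 1) := add_le_add ihl h
        _ = _ := by ring

/-! ### Padé approximation and the case `y = 1`, `n ≥ 47` -/

/-- Integral Padé-type relation between `(n + 2) ^ (l + b)` and `n ^ (l + a)`. Partial fractions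
write `hsym (n + 2) n a b l` as a combination of the two powers whose denominator is a power of the
difference `(n + 2) - n = 2`. The bound on `U` and the sign of `V` are propagated through the
recursion `hsym_step`. -/
theorem pade {n : ℤ} (hn : 2 ≤ n) (s : ℕ) :
    ∀ a b l : ℕ, a + b = s + 1 → ∃ U V : ℤ,
      2 ^ s * hsym (n + 2) n a b l = (n + 2) ^ (l + b) * U + n ^ (l + a) * V ∧
      |(U : ℝ)| * (5 / 2 * (n + 2)) ≤ (5 / 2 * (n + 2)) ^ a * (5 / 2) ^ b * (5 / 4) ^ l ∧
      0 ≤ (-1) ^ a * V ∧ (0 < b → 0 < (-1) ^ a * V) := by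
  have hn0 : (2 : ℝ) ≤ n := by exact_mod_cast hn
  induction s with
  | zero =>
    intro a b l hab
    obtain ⟨rfl, rfl⟩ | ⟨rfl, rfl⟩ : (a = 1 ∧ b = 0) ∨ (a = 0 ∧ b = 1) := by omega
    · refine ⟨1, 0, by simp [hsym], ?_, by simp, by simp⟩
      have := one_le_pow₀ (n := l) (by norm_num : (1 : ℝ) ≤ 5 / 4)
      simp only [Int.cast_one, abs_one, one_mul, pow_one, pow_zero, mul_one]
      exact le_mul_of_one_le_right (by positivity) this
    · exact ⟨0, 1, by simp [hsym], by simp; positivity, by simp, by simp⟩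
  | succ s ih =>
    intro a b l hab
    rcases a with _ | a
    · obtain rfl : b = s + 2 := by omega
      refine ⟨0, 2 ^ (s + 1) * (l + (s + 1)).choose l, ?_, by simp; positivity, by positivity, fun _ => ?_⟩
      · rw [hsym_comm, hsym_pure]
        ring
      · have : 0 < (l + (s + 1)).choose l := Nat.choose_pos (by omega)
        positivity
    rcases b with _ | b
    · obtain rfl : a = s + 1 := by omega
      refine ⟨2 ^ (s + 1) * (l + (s + 1)).choose l, 0, ?_, ?_, by simp, by simp⟩
      · rw [hsym_pure]
        ring
      · have h := choose_le_aux (s + 1) l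
        rw [abs_of_nonneg (by positivity)]
        push_cast
        calc _ ≤ (2 : ℝ) ^ (s + 1) * (5 ^ (s + 1) * (5 / 4) ^ l) * (5 / 2 * (n + 2)) := by gcongr
          _ = 10 ^ (s + 1) * (5 / 2 * (n + 2)) * (5 / 4) ^ l := by
            rw [show (10 : ℝ) = 2 * 5 by norm_num, mul_pow]; ring
          _ ≤ (5 / 2 * (n + 2)) ^ (s + 1) * (5 / 2 * (n + 2)) * (5 / 4) ^ l := by
            gcongr; linarith
          _ = _ := by ring
    · obtain ⟨U₁, V₁, e₁, u₁, v₁, w₁⟩ := ih (a + 1) b (l + 1) (by omega)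
      obtain ⟨U₂, V₂, e₂, u₂, v₂, w₂⟩ := ih a (b + 1) (l + 1) (by omega)
      refine ⟨U₁ - (n + 2) * U₂, n * V₁ - V₂, ?_, ?_, ?_, fun _ => ?_⟩
      · linear_combination 2 ^ s * hsym_step (n + 2) n a b l + e₁ - e₂
      · have habs : |((U₁ - (n + 2) * U₂ : ℤ) : ℝ)| ≤ |(U₁ : ℝ)| + (n + 2) * |(U₂ : ℝ)| := by
          push_cast
          refine (abs_sub _ _).trans ?_
          rw [abs_mul, abs_of_nonneg (by linarith : (0 : ℝ) ≤ n + 2)]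
        calc _ ≤ (|(U₁ : ℝ)| + (n + 2) * |(U₂ : ℝ)|) * (5 / 2 * (n + 2)) := by gcongr
          _ = |(U₁ : ℝ)| * (5 / 2 * (n + 2)) + (n + 2) * (|(U₂ : ℝ)| * (5 / 2 * (n + 2))) := by ring
          _ ≤ _ := add_le_add u₁ (mul_le_mul_of_nonneg_left u₂ (by linarith))
          _ = _ := by ring
      · have := mul_nonneg (by linarith : 0 ≤ n) v₁
        rw [pow_succ] at this ⊢
        linarith
      · have := mul_nonneg (by linarith : 0 ≤ n) v₁
        have := w₂ (by omega)
        rw [pow_succ] at *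
        linarith

/-- The approximation with `a = b = m + 1` excludes a solution of exponent `z = l + m + 1` as soon as
the numerical inequality `hlt` holds. The multiple `2 ^ (2 * m + 1) * H - (n + 1) * U` of `n ^ z` is
too small to be nonzero; but if it vanished, then `U < 0` because `V > 0`, and both terms would
contribute positively. -/
theorem pade_contra {n : ℤ} (hn : 2 ≤ n) {m l x : ℕ} (hm : Odd m) (hx : l + m + 1 ≤ x)
    (heq : n ^ x + (n + 1) = (n + 2) ^ (l + m + 1))
    (hlt : 3 ^ (2 * m + 1) * (3 * (n + 2 : ℝ)) ^ l +
      (n + 1) * ((5 / 2 * (n + 2)) ^ m * (5 / 2) ^ (m + 1) * (5 / 4) ^ l) < (n : ℝ) ^ (l + m + 1)) :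
    False := by
  have hn0 : (2 : ℝ) ≤ n := by exact_mod_cast hn
  obtain ⟨U, V, e, hU, -, hV⟩ := pade hn (2 * m + 1) (m + 1) (m + 1) l (by ring)
  have hVneg : 0 < V := by simpa [hm.add_one.neg_one_pow] using hV (by omega)
  have hHpos := hsym_pos (by linarith : 0 < n + 2) (by linarith : 0 < n) m (m + 1) l
  have hHle := hsym_le (by linarith : 0 < n) (by linarith : n ≤ n + 2) (2 * m + 1)
    (m + 1) (m + 1) l (by ring)
  set H := hsym (n + 2) n (m + 1) (m + 1) l with hH
  obtain ⟨r, rfl⟩ := Nat.exists_eq_add_of_le hx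
  have hT : 2 ^ (2 * m + 1) * H - (n + 1) * U = n ^ (l + m + 1) * (U * n ^ r + V) := by
    rw [← add_assoc] at e
    rw [e, ← heq, pow_add n _ r]
    ring
  have hUle : |(U : ℝ)| ≤ (5 / 2 * (n + 2)) ^ m * (5 / 2) ^ (m + 1) * (5 / 4) ^ l := by
    refine le_of_mul_le_mul_right (hU.trans_eq ?_) (by positivity : (0 : ℝ) < 5 / 2 * (n + 2))
    ring
  have hsmall : |(((2 ^ (2 * m + 1) * H - (n + 1) * U : ℤ)) : ℝ)| < (n : ℝ) ^ (l + m + 1) := by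
    push_cast at hHle ⊢
    refine lt_of_le_of_lt ((abs_sub _ _).trans (add_le_add ?_ ?_)) hlt
    · rw [abs_of_nonneg (by positivity)]
      calc _ ≤ (2 : ℝ) ^ (2 * m + 1) * ((3 / 2) ^ (2 * m + 1) * (3 * (n + 2)) ^ l) := by gcongr
        _ = _ := by rw [← mul_assoc, ← mul_pow]; norm_num
    · rw [abs_mul, abs_of_nonneg (by linarith : (0 : ℝ) ≤ n + 1)]
      gcongr
  have hzero : U * n ^ r + V = 0 := by
    by_contra h
    have h1 : (1 : ℝ) ≤ |((U * n ^ r + V : ℤ) : ℝ)| := by exact_mod_cast Int.one_le_abs h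
    rw [hT, Int.cast_mul, abs_mul, Int.cast_pow, abs_of_nonneg (by positivity)] at hsmall
    have h2 : (0 : ℝ) < (n : ℝ) ^ (l + m + 1) := by positivity
    nlinarith
  have hUneg : U < 0 := by
    by_contra! h
    have : 0 ≤ U * n ^ r := by positivity
    linarith
  rw [hzero, mul_zero] at hT
  have h1 : 0 < 2 ^ (2 * m + 1) * H := by positivity
  have h2 : (n + 1) * U < 0 := mul_neg_of_pos_of_neg (by linarith) hUneg
  linarith

/-- The numerical condition of `pade_contra` for `z = 2 * m + 1`, that is `l = m`. -/
theorem bound_one {t : ℝ} (ht : 47 ≤ t) (m : ℕ) (hm : 1 ≤ m) :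
    3 ^ (2 * m + 1) * (3 * (t + 2)) ^ m +
      (t + 1) * ((5 / 2 * (t + 2)) ^ m * (5 / 2) ^ (m + 1) * (5 / 4) ^ m) < t ^ (m + m + 1) := by
  have e1 : 3 ^ (2 * m + 1) * (3 * (t + 2)) ^ m = 3 * (27 * (t + 2)) ^ m := by
    rw [pow_succ, pow_mul, mul_right_comm, ← mul_pow]; ring_nf
  have e2 : (5 / 2 * (t + 2)) ^ m * (5 / 2) ^ (m + 1) * (5 / 4) ^ m =
      5 / 2 * (125 / 16 * (t + 2)) ^ m := by
    rw [pow_succ, show (125 / 16 * (t + 2)) = (5 / 2 * (t + 2)) * (5 / 2) * (5 / 4) by ring,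
      mul_pow (5 / 2 * (t + 2) * (5 / 2)), mul_pow (5 / 2 * (t + 2))]; ring
  have e3 : t ^ (m + m + 1) = t * (t ^ 2) ^ m := by rw [← pow_mul]; ring
  rw [e1, e2, e3]
  obtain ⟨j, rfl⟩ := Nat.exists_eq_add_of_le' hm
  have p : 0 < (t ^ 2) ^ j := by positivity
  have b1 : (27 * (t + 2)) ^ (j + 1) ≤ (t ^ 2) ^ (j + 1) := by gcongr; nlinarith
  have b2 : (125 / 16 * (t + 2)) ^ j ≤ (t ^ 2) ^ j := by gcongr; nlinarith
  have b3 : (t + 1) * (5 / 2 * (125 / 16 * (t + 2)) ^ (j + 1)) ≤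
      (t + 1) * (5 / 2 * ((t ^ 2) ^ j * (125 / 16 * (t + 2)))) := by
    rw [pow_succ]; gcongr
  have c : 3 * t ^ 2 + (t + 1) * (5 / 2 * (125 / 16 * (t + 2))) < t * t ^ 2 := by nlinarith
  have := mul_lt_mul_of_pos_left c p
  rw [pow_succ (t ^ 2)] at *
  linarith

/-- The numerical condition of `pade_contra` for `z = 2 * m + 3`, that is `l = m + 2`. -/
theorem bound_two {t : ℝ} (ht : 47 ≤ t) (m : ℕ) (hm : 1 ≤ m) :
    3 ^ (2 * m + 1) * (3 * (t + 2)) ^ (m + 2) +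
      (t + 1) * ((5 / 2 * (t + 2)) ^ m * (5 / 2) ^ (m + 1) * (5 / 4) ^ (m + 2)) <
        t ^ (m + 2 + m + 1) := by
  have e1 : 3 ^ (2 * m + 1) * (3 * (t + 2)) ^ (m + 2) = 27 * (t + 2) ^ 2 * (27 * (t + 2)) ^ m := by
    rw [pow_succ, pow_mul, show 27 * (t + 2) = 3 ^ 2 * (3 * (t + 2)) by ring, mul_pow (3 ^ 2),
      pow_add _ m 2]
    ring
  have e2 : (5 / 2 * (t + 2)) ^ m * (5 / 2) ^ (m + 1) * (5 / 4) ^ (m + 2) =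
      125 / 32 * (125 / 16 * (t + 2)) ^ m := by
    rw [pow_succ, pow_add _ m 2,
      show (125 / 16 * (t + 2)) = (5 / 2 * (t + 2)) * (5 / 2) * (5 / 4) by ring,
      mul_pow (5 / 2 * (t + 2) * (5 / 2)), mul_pow (5 / 2 * (t + 2))]; ring
  have e3 : t ^ (m + 2 + m + 1) = t ^ 3 * (t ^ 2) ^ m := by rw [← pow_mul]; ring
  rw [e1, e2, e3]
  obtain ⟨j, rfl⟩ := Nat.exists_eq_add_of_le' hm
  have p : 0 < (t ^ 2) ^ j := by positivity
  have b1 : (27 * (t + 2)) ^ j ≤ (t ^ 2) ^ j := by gcongr; nlinarith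
  have b2 : (125 / 16 * (t + 2)) ^ j ≤ (t ^ 2) ^ j := by gcongr; nlinarith
  have b3 : 27 * (t + 2) ^ 2 * (27 * (t + 2)) ^ (j + 1) ≤
      27 * (t + 2) ^ 2 * ((t ^ 2) ^ j * (27 * (t + 2))) := by
    rw [pow_succ (27 * (t + 2))]; gcongr
  have b4 : (t + 1) * (125 / 32 * (125 / 16 * (t + 2)) ^ (j + 1)) ≤
      (t + 1) * (125 / 32 * ((t ^ 2) ^ j * (125 / 16 * (t + 2)))) := by
    rw [pow_succ]; gcongr
  have c : 27 * (t + 2) ^ 2 * (27 * (t + 2)) + (t + 1) * (125 / 32 * (125 / 16 * (t + 2))) <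
      t ^ 3 * t ^ 2 := by
    obtain ⟨u, rfl⟩ : ∃ u, t = 47 + u := ⟨t - 47, by ring⟩
    have hu : 0 ≤ u := by linarith
    ring_nf
    nlinarith [pow_nonneg hu 2, pow_nonneg hu 3, pow_nonneg hu 4, pow_nonneg hu 5]
  have := mul_lt_mul_of_pos_left c p
  rw [pow_succ (t ^ 2)] at *
  linarith

/-- `pade_contra` needs `m` odd, so `l = m` serves `z ≡ 3` modulo `4` and `l = m + 2` serves
`z ≡ 1` modulo `4`. -/
theorem no_solution_one_large {n x z : ℕ} (hn : 47 ≤ n) (hz : Odd z) (hz1 : z ≠ 1) (hx : z ≤ x) :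
    n ^ x + (n + 1) ≠ (n + 2) ^ z := by
  intro h
  have h' : (n : ℤ) ^ x + (n + 1) = (n + 2) ^ z := by exact_mod_cast h
  have ht : (47 : ℝ) ≤ ((n : ℤ) : ℝ) := by exact_mod_cast hn
  obtain ⟨w, rfl⟩ := hz
  rcases Nat.even_or_odd w with ⟨v, rfl⟩ | hw
  · obtain ⟨m, rfl⟩ : ∃ m, v = m + 1 := ⟨v - 1, by omega⟩
    have e : 2 * (m + 1 + (m + 1)) + 1 = (2 * m + 1 + 2) + (2 * m + 1) + 1 := by ring
    rw [e] at h' hx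
    exact pade_contra (by omega) (by simp) hx h' (bound_two ht _ (by omega))
  · have e : 2 * w + 1 = w + w + 1 := by ring
    rw [e] at h' hx
    exact pade_contra (by omega) hw hx h' (bound_one ht _ hw.pos)

/-! ### The case `y = 1`, `n < 47` -/

/-- Sieving modulo `N`: the sequences `n ^ (r + 1)` and `(n + 2) ^ (s + 1)` are periodic modulo `N`
with the even periods `L` and `K`, so it suffices to compare residues over one period, for the
parities of the exponents that are relevant. -/
theorem ne_of_residues_ne (n N L K : ℕ) (hL : Even L) (hK : Even K) (hL0 : L ≠ 0) (hK0 : K ≠ 0)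
    (hn : n ^ (L + 1) % N = n % N) (hM : (n + 2) ^ (K + 1) % N = (n + 2) % N)
    (h : ∀ r < L, r % 2 = 1 → ∀ s < K, s % 2 = 0 →
      (n ^ (r + 1) + (n + 1)) % N ≠ (n + 2) ^ (s + 1) % N)
    {x z : ℕ} (hx : Even x) (hx0 : x ≠ 0) (hz : Odd z) : n ^ x + (n + 1) ≠ (n + 2) ^ z := by
  have per : ∀ a T : ℕ, a ^ (T + 1) ≡ a [MOD N] → ∀ q r, a ^ (T * q + r + 1) ≡ a ^ (r + 1) [MOD N] := by
    intro a T ha q r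
    induction q with
    | zero => simpa using Nat.ModEq.refl _
    | succ q ih =>
      have := (ha.mul_right (a ^ (T * q + r)))
      rw [← pow_add, ← pow_succ'] at this
      refine Nat.ModEq.trans ?_ ih
      convert this using 2
      ring
  intro he
  obtain ⟨x, rfl⟩ := Nat.exists_eq_succ_of_ne_zero hx0
  obtain ⟨z, rfl⟩ := Nat.exists_eq_succ_of_ne_zero (Nat.pos_iff_ne_zero.1 hz.pos)
  have h1 := per n L hn (x / L) (x % L)
  have h2 := per (n + 2) K hM (z / K) (z % K)
  rw [Nat.div_add_mod] at h1 h2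
  refine h (x % L) (Nat.mod_lt _ (by omega)) ?_ (z % K) (Nat.mod_lt _ (by omega)) ?_ ?_
  · rw [Nat.mod_mod_of_dvd _ hL.two_dvd]; grind
  · rw [Nat.mod_mod_of_dvd _ hK.two_dvd]; grind
  · exact ((h1.symm.add_right _).trans (by rw [Nat.succ_eq_add_one, Nat.succ_eq_add_one] at he; rw [he])).trans h2

theorem no_solution_one_small {n x z : ℕ} (hn4 : 4 ≤ n) (hn : n < 47) (hodd : Odd n)
    (hx : Even x) (hx0 : x ≠ 0) (hz : Odd z) : n ^ x + (n + 1) ≠ (n + 2) ^ z := by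
  have hk := fun n N L K hL hK hL0 hK0 hn hM h =>
    ne_of_residues_ne n N L K hL hK hL0 hK0 hn hM h hx hx0 hz
  -- For each odd `n` the numerals are `n`, a suitable modulus, and periods of the powers of `n` and
  -- of `n + 2` for that modulus.
  interval_cases n <;> first | (exfalso; revert hodd; decide) | skip
  · exact hk 5 5 2 4 (by decide) (by decide) (by decide) (by decide) (by decide) (by decide)
      (by decide +kernel)
  · exact hk 7 91 12 6 (by decide) (by decide) (by decide) (by decide) (by decide) (by decide)
      (by decide +kernel)
  · exact hk 9 3 2 2 (by decide) (by decide) (by decide) (by decide) (by decide) (by decide)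
      (by decide +kernel)
  · exact hk 11 11 2 10 (by decide) (by decide) (by decide) (by decide) (by decide) (by decide)
      (by decide +kernel)
  · exact hk 13 13 2 12 (by decide) (by decide) (by decide) (by decide) (by decide) (by decide)
      (by decide +kernel)
  · exact hk 15 3 2 2 (by decide) (by decide) (by decide) (by decide) (by decide) (by decide)
      (by decide +kernel)
  · exact hk 17 17 2 8 (by decide) (by decide) (by decide) (by decide) (by decide) (by decide)
      (by decide +kernel)
  · exact hk 19 19 2 18 (by decide) (by decide) (by decide) (by decide) (by decide) (by decide)
      (by decide +kernel)
  · exact hk 21 3 2 2 (by decide) (by decide) (by decide) (by decide) (by decide) (by decide)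
      (by decide +kernel)
  · exact hk 23 1541 66 22 (by decide) (by decide) (by decide) (by decide) (by decide) (by decide)
      (by decide +kernel)
  · exact hk 25 5 2 4 (by decide) (by decide) (by decide) (by decide) (by decide) (by decide)
      (by decide +kernel)
  · exact hk 27 3 2 2 (by decide) (by decide) (by decide) (by decide) (by decide) (by decide)
      (by decide +kernel)
  · exact hk 29 29 2 28 (by decide) (by decide) (by decide) (by decide) (by decide) (by decide)
      (by decide +kernel)
  · exact hk 31 1891 60 20 (by decide) (by decide) (by decide) (by decide) (by decide) (by decide)
      (by decide +kernel)
  · exact hk 33 3 2 2 (by decide) (by decide) (by decide) (by decide) (by decide) (by decide)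
      (by decide +kernel)
  · exact hk 35 5 2 4 (by decide) (by decide) (by decide) (by decide) (by decide) (by decide)
      (by decide +kernel)
  · exact hk 37 37 2 36 (by decide) (by decide) (by decide) (by decide) (by decide) (by decide)
      (by decide +kernel)
  · exact hk 39 3 2 2 (by decide) (by decide) (by decide) (by decide) (by decide) (by decide)
      (by decide +kernel)
  · exact hk 41 41 2 20 (by decide) (by decide) (by decide) (by decide) (by decide) (by decide)
      (by decide +kernel)
  · exact hk 43 43 2 14 (by decide) (by decide) (by decide) (by decide) (by decide) (by decide)
      (by decide +kernel)
  · exact hk 45 3 2 2 (by decide) (by decide) (by decide) (by decide) (by decide) (by decide)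
      (by decide +kernel)

/-! ### The case `y ≥ 2` -/

theorem sq_dvd_one_add_pow_sub (D : ℤ) (k : ℕ) : D ^ 2 ∣ (1 + D) ^ k - (1 + k * D) := by
  induction k with
  | zero => simp
  | succ k ih =>
    obtain ⟨c, hc⟩ := ih
    refine ⟨c * (1 + D) + k, ?_⟩
    rw [pow_succ]
    push_cast
    linear_combination (1 + D) * hc

/-- The quotient `(n ^ X + 1) / (n + 1)` is odd: it is congruent to `X` modulo `n + 1`. -/
theorem odd_quot {n X t : ℕ} (hn : Odd n) (hX : Odd X) (h : n ^ X + 1 = (n + 1) * t) : Odd t := by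
  have h1 := sq_dvd_one_add_pow_sub (-(n + 1 : ℤ)) X
  have h2 : (1 + -(n + 1 : ℤ)) ^ X = -(n : ℤ) ^ X := by
    rw [show (1 + -(n + 1 : ℤ)) = -n by ring, hX.neg_pow]
  have h' : (n : ℤ) ^ X + 1 = (n + 1) * t := by exact_mod_cast h
  rw [h2] at h1
  have h3 : (n + 1 : ℤ) * (n + 1) ∣ (n + 1) * ((X : ℤ) - t) := by
    obtain ⟨c, hc⟩ := h1
    exact ⟨c, by linear_combination hc + h'⟩
  have h4 : (n + 1 : ℤ) ∣ (X : ℤ) - t := Int.dvd_of_mul_dvd_mul_left (by positivity) h3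
  obtain ⟨c, rfl⟩ := hn
  obtain ⟨d, rfl⟩ := hX
  obtain ⟨e, he⟩ := h4
  rcases Nat.even_or_odd' t with ⟨u, rfl | rfl⟩
  · exfalso
    have : (2 : ℤ) ∣ 1 := ⟨(c + 1) * e - d + u, by push_cast at he; linarith⟩
    omega
  · exact ⟨u, rfl⟩

/-- As `(n ^ X + 1) / (n + 1)` is odd and `n + 1` is even, comparing powers of two leaves only `y ≤ 3`,
where the two sides have different sizes. -/
theorem case_one {n X y : ℕ} (hn : 4 < n) (hodd : Odd n) (hX : Odd X)
    (hy : 2 ≤ y) (h : 4 * (n ^ X + 1) = (n + 1) ^ y) : False := by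
  obtain ⟨t, ht⟩ : n + 1 ∣ n ^ X + 1 := by simpa using hX.nat_add_dvd_pow_add_pow n 1
  have hto := odd_quot hodd hX ht
  obtain ⟨v, rfl⟩ : ∃ v, y = v + 1 := ⟨y - 1, by omega⟩
  have hv : 4 * t = (n + 1) ^ v := by
    refine Nat.eq_of_mul_eq_mul_left (Nat.succ_pos n) ?_
    rw [Nat.succ_eq_add_one, ← pow_succ', ← h, ht]; ring
  have hv3 : v < 3 := by
    by_contra! hc
    have h8 : 2 ^ 3 ∣ (n + 1) ^ v :=
      (pow_dvd_pow_of_dvd hodd.add_one.two_dvd 3).trans (pow_dvd_pow _ hc)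
    rw [← hv] at h8
    -- `8 ∣ 4 * t` contradicts `t` odd
    grind
  have hX3 : X = 1 ∨ 3 ≤ X := by grind
  have hv1 : 1 ≤ v := by omega
  interval_cases v
  · rcases hX3 with rfl | hX3
    · nlinarith
    · have := Nat.pow_le_pow_right (by omega : 0 < n) (by omega : 2 ≤ X)
      nlinarith
  · rcases hX3 with rfl | hX3
    · nlinarith
    · have := Nat.pow_le_pow_right (by omega : 0 < n) hX3
      nlinarith [Nat.pow_le_pow_left hn.le 2]

/-- If the sum and the difference of two odd numbers are powers of two, the difference is `2`:
otherwise `4` divides both, hence also `2 * P`. -/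
theorem pow_two_sub {P Q i j : ℕ} (hP : Odd P) (hQ : Odd Q) (hQ3 : 3 ≤ Q)
    (hi : P - Q = 2 ^ i) (hj : P + Q = 2 ^ j) : P = Q + 2 := by
  have hi0 : 0 < 2 ^ i := by positivity
  obtain ⟨a, rfl⟩ := hP
  obtain ⟨b, rfl⟩ := hQ
  rcases i with _ | _ | i
  · rw [pow_zero] at hi; omega
  · omega
  · rcases j with _ | _ | j
    · rw [pow_zero] at hj; omega
    · omega
    · rw [pow_succ, pow_succ] at hi hj
      omega

/-- Reduction modulo `m` excludes `y = 0`; otherwise `Z = 2 * W` is even by reduction modulo `4`.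
For `y` odd, `2 ^ (y + 1)` is a difference of squares
`((2 * m + 1) ^ W) ^ 2 - (m ^ ((y + 3) / 2)) ^ 2`, so the two bases differ by `2`, contradicting
`2 * m + 1 ≡ 1` modulo `m`.
For `y > 0` even, reduction modulo `8` gives `m ≡ 1`, so `2` has Jacobi symbol `-1` modulo
`2 * m + 1 ≡ 3`, while eliminating `m ^ (y + 3)` gives `2 ^ X ≡ 2 ^ (y + 2)` modulo `2 * m + 1` with
`X` odd and `y + 2` even. -/
theorem case_two {m X Z y : ℕ} (hm : 3 ≤ m) (hodd : Odd m) (hX : Odd X)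
    (hM : (2 * m + 1) ^ Z = m ^ (y + 3) + 2 ^ (y + 1))
    (hn : (2 * m - 1) ^ X + 2 ^ (y + 1) = m ^ (y + 3)) : False := by
  have hmod : ∀ k, (2 * m + 1) ^ k ≡ 1 [MOD m] := fun k => by
    have : 2 * m + 1 ≡ 1 [MOD m] := by simp [Nat.ModEq, Nat.add_mod]
    simpa using this.pow k
  rcases Nat.eq_zero_or_pos y with rfl | hy
  · have h := hmod Z
    rw [hM] at h
    have h2 : m ^ (0 + 3) + 2 ^ (0 + 1) ≡ 2 [MOD m] := by
      have : m ∣ m ^ (0 + 3) := dvd_pow_self _ (by simp)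
      exact (Nat.modEq_zero_iff_dvd.2 this).add_right 2
    have h3 := (h.symm.trans h2)
    have := (Nat.modEq_iff_dvd' (by norm_num)).1 h3
    have := Nat.le_of_dvd (by norm_num) this
    omega
  have hZ : Even Z := by
    by_contra hZ
    rw [Nat.not_even_iff_odd] at hZ
    obtain ⟨c, rfl⟩ := hodd
    have e1 : (2 * (2 * c + 1) + 1) ^ Z ≡ 3 [MOD 4] := by
      obtain ⟨d, rfl⟩ := hZ
      have : 2 * (2 * c + 1) + 1 ≡ 3 [MOD 4] := by simp [Nat.ModEq]; omega
      have h9 : 3 ^ (2 * d) ≡ 1 [MOD 4] := by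
        rw [pow_mul]; simpa using (show 3 ^ 2 ≡ 1 [MOD 4] by decide).pow d
      refine (this.pow _).trans ?_
      rw [pow_succ]
      simpa using h9.mul_right 3
    have e2 : (2 * (2 * c + 1) - 1) ^ X ≡ 1 [MOD 4] := by
      have : 2 * (2 * c + 1) - 1 ≡ 1 [MOD 4] := by simp [Nat.ModEq]; omega
      simpa using this.pow X
    have e3 : (2 : ℕ) ^ (y + 1) * 2 = 4 * 2 ^ y := by ring
    unfold Nat.ModEq at *
    omega
  obtain ⟨W, rfl⟩ := hZ.two_dvd
  rcases Nat.even_or_odd y with hy2 | hy2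
  · obtain ⟨v, rfl⟩ : ∃ v, y = 2 * v + 2 := by
      obtain ⟨c, hc⟩ := hy2
      exact ⟨c - 1, by omega⟩
    have hm8 : m % 8 = 1 := by
      have e1 : ∀ q : ℕ, Odd q → ∀ k, q ^ (2 * k) ≡ 1 [MOD 8] := by
        intro q hq k
        rw [pow_mul]
        have : q ^ 2 ≡ 1 [MOD 8] := by
          have h8 : q % 8 < 8 := Nat.mod_lt _ (by norm_num)
          have ho : q % 8 % 2 = 1 := by grind
          unfold Nat.ModEq
          rw [Nat.pow_mod]
          interval_cases q % 8 <;> simp_all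
        simpa using this.pow k
      have e2 := e1 _ ⟨m, rfl⟩ W
      have e3 : m ^ (2 * v + 2 + 3) ≡ m [MOD 8] := by
        rw [show 2 * v + 2 + 3 = 2 * (v + 2) + 1 by ring, pow_succ]
        simpa using (e1 _ hodd (v + 2)).mul_right m
      have e4 : (2 : ℕ) ^ (2 * v + 2 + 1) = 8 * 2 ^ (2 * v) := by ring
      unfold Nat.ModEq at *
      omega
    have hJ2 : jacobiSym 2 (2 * m + 1) = -1 := by
      rw [jacobiSym.at_two ⟨m, rfl⟩, ZMod.χ₈_nat_eq_if_mod_eight]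
      have : (2 * m + 1) % 8 = 3 := by omega
      have : (2 * m + 1) % 2 = 1 := by omega
      simp [*]
    have hcong : (2 : ℤ) ^ X ≡ 2 ^ (2 * v + 4) [ZMOD (2 * m + 1 : ℕ)] := by
      have e1 : ((2 * m - 1 : ℕ) : ℤ) = (2 * m + 1) + -2 := by omega
      have hn' : (((2 * m - 1 : ℕ) : ℤ)) ^ X + 2 ^ (2 * v + 2 + 1) = m ^ (2 * v + 2 + 3) := by
        exact_mod_cast hn
      have hM' : (2 * (m : ℤ) + 1) ^ (2 * W) = m ^ (2 * v + 2 + 3) + 2 ^ (2 * v + 2 + 1) := by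
        exact_mod_cast hM
      have e2 : ((2 * m - 1 : ℕ) : ℤ) ^ X ≡ -2 ^ X [ZMOD (2 * m + 1 : ℕ)] := by
        rw [e1, ← hX.neg_pow]
        apply Int.ModEq.pow
        simp [Int.ModEq]
      have e3 : (2 * (m : ℤ) + 1) ^ (2 * W) ≡ 0 [ZMOD (2 * m + 1 : ℕ)] := by
        refine Int.modEq_zero_iff_dvd.2 ?_
        push_cast
        refine dvd_pow_self _ ?_
        rintro h0
        rw [h0, pow_zero] at hM
        have : 1 < m ^ (2 * v + 2 + 3) := Nat.one_lt_pow (by omega) (by omega)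
        have : 0 < 2 ^ (2 * v + 2 + 1) := by positivity
        linarith
      have e4 := e2.symm.trans (show _ ≡ -2 ^ (2 * v + 4) [ZMOD (2 * m + 1 : ℕ)] from ?_)
      · simpa using e4.neg
      · have : ((2 * m - 1 : ℕ) : ℤ) ^ X = (2 * (m : ℤ) + 1) ^ (2 * W) + -2 ^ (2 * v + 4) := by
          linear_combination hn' - hM'
        rw [this]
        simpa using e3.add_right (-2 ^ (2 * v + 4))
    have hJ : jacobiSym (2 ^ X) (2 * m + 1) = jacobiSym (2 ^ (2 * v + 4)) (2 * m + 1) :=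
      jacobiSym.mod_left' hcong
    rw [jacobiSym.pow_left, jacobiSym.pow_left, hJ2, hX.neg_one_pow,
      (show Even (2 * v + 4) from ⟨v + 2, by ring⟩).neg_one_pow] at hJ
    norm_num at hJ
  · obtain ⟨v, rfl⟩ := hy2
    have hfac : ((2 * m + 1) ^ W + m ^ (v + 2)) * ((2 * m + 1) ^ W - m ^ (v + 2)) =
        2 ^ (2 * v + 1 + 1) := by
      rw [← Nat.sq_sub_sq, ← pow_mul, ← pow_mul, mul_comm W, hM,
        show (v + 2) * 2 = 2 * v + 1 + 3 by ring]
      exact Nat.add_sub_cancel_left _ _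
    obtain ⟨i, -, hi⟩ := (Nat.dvd_prime_pow Nat.prime_two).1 (Dvd.intro_left _ hfac)
    obtain ⟨j, -, hj⟩ := (Nat.dvd_prime_pow Nat.prime_two).1 (Dvd.intro _ hfac)
    have o1 : Odd ((2 * m + 1) ^ W) := Odd.pow ⟨m, rfl⟩
    have o2 : Odd (m ^ (v + 2)) := hodd.pow
    have p2 : m ≤ m ^ (v + 2) := Nat.le_self_pow (by omega) m
    have hPQ := pow_two_sub o1 o2 (hm.trans p2) hi hj
    have h := hmod W
    rw [show (2 * m + 1) ^ W = m ^ (v + 2) + 2 from hPQ] at h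
    have h2 : m ^ (v + 2) + 2 ≡ 2 [MOD m] := by
      have : m ∣ m ^ (v + 2) := dvd_pow_self _ (by simp)
      exact (Nat.modEq_zero_iff_dvd.2 this).add_right 2
    have h3 := (h.symm.trans h2)
    have := (Nat.modEq_iff_dvd' (by norm_num)).1 h3
    have := Nat.le_of_dvd (by norm_num) this
    omega


/-- The case of even `x` and `z` with `n + 1 = 2 * m`, through the coprime factorisation
`a * (n ^ X + a) = 2 ^ y * m ^ (y + 2)` where `M ^ Z = n ^ X + 2 * a`. For `X` even the larger factor
is prime to `m`, for `X` odd the smaller one is. -/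
theorem no_solution_even {m X Z y : ℕ} (hm : 3 ≤ m)
    (h : (2 * m - 1) ^ (2 * X) + (2 * m) ^ (y + 2) = (2 * m + 1) ^ (2 * Z)) : False := by
  have hcop : Nat.Coprime (2 * m + 1) (2 * m - 1) := by
    rw [show 2 * m + 1 = (2 * m - 1) + 2 by omega, Nat.coprime_self_add_left,
      Nat.coprime_two_left]
    exact ⟨m - 1, by omega⟩
  have hcopPN := hcop.pow Z X
  have oP : Odd ((2 * m + 1) ^ Z) := Odd.pow ⟨m, rfl⟩
  have oN : Odd ((2 * m - 1) ^ X) := Odd.pow ⟨m - 1, by omega⟩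
  obtain ⟨j, hj⟩ : 2 * m ∣ (2 * m + 1) ^ Z - 1 := by
    simpa using Nat.sub_dvd_pow_sub_pow (2 * m + 1) 1 Z
  have hP1 : 1 ≤ (2 * m + 1) ^ Z := Nat.one_le_pow _ _ (by omega)
  have hN1 : 1 ≤ (2 * m - 1) ^ X := Nat.one_le_pow _ _ (by omega)
  have hXo : Odd X → 2 * m ∣ (2 * m - 1) ^ X + 1 := fun hX => by
    have := hX.nat_add_dvd_pow_add_pow (2 * m - 1) 1
    rwa [one_pow, Nat.sub_add_cancel (by omega)] at this
  have hXe : Even X → 2 * m ∣ (2 * m - 1) ^ X - 1 := fun hX => by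
    obtain ⟨k, rfl⟩ := hX.two_dvd
    have := Nat.sub_dvd_pow_sub_pow ((2 * m - 1) ^ 2) 1 k
    rw [one_pow, ← pow_mul] at this
    refine Dvd.dvd.trans ⟨2 * m - 2, ?_⟩ this
    obtain ⟨c, rfl⟩ := Nat.exists_eq_add_of_le hm
    rw [show 2 * (3 + c) - 1 = 2 * c + 5 by omega, show 2 * (3 + c) - 2 = 2 * c + 4 by omega]
    rw [Nat.sub_eq_iff_eq_add (Nat.one_le_pow _ _ (by omega))]
    ring
  have hpm := fun hX => case_one (n := 2 * m - 1) (X := X) (y := y + 2) (by omega)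
    ⟨m - 1, by omega⟩ hX (by omega)
  have hct := fun hmo hX y => case_two (m := m) (X := X) (Z := Z) (y := y) hm hmo hX
  rw [Nat.sub_add_cancel (by omega)] at hpm
  have hlt : (2 * m - 1) ^ X < (2 * m + 1) ^ Z := by
    refine lt_of_pow_lt_pow_left₀ 2 (by positivity) ?_
    rw [← pow_mul, ← pow_mul, mul_comm X, mul_comm Z, ← h]
    exact Nat.lt_add_of_pos_right (by positivity)
  rw [mul_comm 2 X, mul_comm 2 Z, pow_mul, pow_mul] at h
  generalize (2 * m - 1) ^ X = N at *
  generalize (2 * m + 1) ^ Z = P at *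
  obtain ⟨a, rfl⟩ : ∃ a, P = N + 2 * a := by
    obtain ⟨c, rfl⟩ := oP
    obtain ⟨d, rfl⟩ := oN
    exact ⟨c - d, by omega⟩
  have ha : 0 < a := by omega
  have hab : a * (N + a) = 2 ^ y * m ^ (y + 2) := by
    have : 4 * (a * (N + a)) = 4 * (2 ^ y * m ^ (y + 2)) := by
      rw [mul_pow] at h
      have e : (2 : ℕ) ^ (y + 2) = 4 * 2 ^ y := by ring
      rw [e] at h
      linarith
    omega
  have hcab : Nat.Coprime a (N + a) := by
    have : Nat.Coprime (2 * a) N := by simpa using hcopPN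
    simpa using Nat.Coprime.coprime_mul_left this
  have h2m : 2 ^ y < m ^ (y + 2) :=
    (Nat.pow_lt_pow_right (by norm_num) (by omega)).trans_le (Nat.pow_le_pow_left (by omega) (y + 2))
  rcases Nat.even_or_odd X with hX | hX
  · obtain ⟨k, hk⟩ := hXe hX
    have hb : N + a = 1 + m * (k + j) := by
      have e1 : 2 * m * k = 2 * (m * k) := by ring
      have e2 : 2 * m * j = 2 * (m * j) := by ring
      rw [mul_add]
      omega
    have hbm : Nat.Coprime (N + a) (m ^ (y + 2)) := by
      apply Nat.Coprime.pow_right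
      rw [hb]
      simp
    have h1 : N + a ∣ 2 ^ y := hbm.dvd_of_dvd_mul_right (Dvd.intro_left _ hab)
    have h2 : m ^ (y + 2) ∣ a := hbm.symm.dvd_of_dvd_mul_right (Dvd.intro_left _ hab.symm)
    have := Nat.le_of_dvd (by positivity) h1
    have := Nat.le_of_dvd ha h2
    omega
  · obtain ⟨k, hk⟩ := hXo hX
    have hb : a + m * k = 1 + m * j := by
      have e1 : 2 * m * k = 2 * (m * k) := by ring
      have e2 : 2 * m * j = 2 * (m * j) := by ring
      omega
    have ham : Nat.Coprime a (m ^ (y + 2)) := by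
      apply Nat.Coprime.pow_right
      have : Nat.gcd a m ∣ 1 := by
        rw [← Nat.dvd_add_left ((Nat.gcd_dvd_right a m).mul_right j), ← hb]
        exact (Nat.gcd_dvd_left a m).add ((Nat.gcd_dvd_right a m).mul_right k)
      exact Nat.dvd_one.1 this
    have h1 : a ∣ 2 ^ y := ham.dvd_of_dvd_mul_right (Dvd.intro _ hab)
    obtain ⟨i, hi, rfl⟩ := (Nat.dvd_prime_pow Nat.prime_two).1 h1
    rcases Nat.eq_zero_or_pos i with rfl | hi0
    · refine hpm hX ?_
      rw [pow_zero, one_mul] at hab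
      rw [hab, mul_pow]
      ring
    · have ob : Odd (N + 2 ^ i) := oN.add_even (Nat.even_pow.2 ⟨even_two, hi0.ne'⟩)
      have hb2 : N + 2 ^ i ∣ m ^ (y + 2) :=
        (Nat.Coprime.pow_right y ((Nat.coprime_two_right).2 ob)).dvd_of_dvd_mul_left
          (Dvd.intro_left _ hab)
      have h2 : m ^ (y + 2) ∣ N + 2 ^ i :=
        ham.symm.dvd_of_dvd_mul_left (Dvd.intro_left _ hab.symm)
      have hb3 : N + 2 ^ i = m ^ (y + 2) := Nat.dvd_antisymm hb2 h2
      rw [hb3] at hab ob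
      have hiy : 2 ^ i = 2 ^ y := Nat.eq_of_mul_eq_mul_right (by positivity) hab
      have hmo : Odd m := (Nat.odd_pow_iff (by omega)).1 ob
      obtain ⟨w, rfl⟩ : ∃ w, y = w + 1 := ⟨y - 1, by omega⟩
      rw [hiy] at hb3
      rw [hiy] at hct
      refine hct hmo hX w ?_ hb3
      rw [show w + 3 = w + 1 + 2 by ring]
      omega

/-! ### Parities of `n`, `x`, `z` and conclusion -/

theorem stmt_17 (f : ℕ) (hf : 3 < f)
    (x y z : ℕ) (hx : 0 < x) (hy : 0 < y) (hz : 0 < z) :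
    f ^ x + (f + 1) ^ y ≠ (f + 2) ^ z := by
  intro h
  have hodd : Odd f := by
    by_contra hev
    rw [Nat.not_odd_iff_even] at hev
    have h1 : Even (f ^ x) := Nat.even_pow.2 ⟨hev, hx.ne'⟩
    have h2 : Odd ((f + 1) ^ y) := hev.add_one.pow
    have h3 : Even ((f + 2) ^ z) := Nat.even_pow.2 ⟨hev.add even_two, hz.ne'⟩
    rw [← h] at h3
    exact Nat.not_even_iff_odd.2 (h1.add_odd h2) h3
  have h' : (f : ℤ) ^ x + (f + 1) ^ y = (f + 2) ^ z := by exact_mod_cast h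
  obtain ⟨A, hA⟩ := sq_dvd_one_add_pow_sub (-(f + 1 : ℤ)) x
  obtain ⟨B, hB⟩ := sq_dvd_one_add_pow_sub (f + 1 : ℤ) z
  rw [show 1 + -(f + 1 : ℤ) = -f by ring] at hA
  rw [show 1 + (f + 1 : ℤ) = f + 2 by ring] at hB
  have hD : (0 : ℤ) < f + 1 := by positivity
  have hxe : Even x := by
    by_contra hxo
    rw [Nat.not_even_iff_odd] at hxo
    rw [hxo.neg_pow] at hA
    obtain ⟨w, rfl⟩ : ∃ w, y = w + 1 := ⟨y - 1, by omega⟩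
    have h2 : (f + 1 : ℤ) ∣ 2 := by
      refine ⟨(f + 1) ^ w - (f + 1) * A + x - z - (f + 1) * B, ?_⟩
      rw [pow_succ] at h'
      linear_combination -h' - hA - hB
    have := Int.le_of_dvd (by norm_num) h2
    omega
  rw [hxe.neg_pow] at hA
  rcases Nat.lt_or_ge y 2 with hy1 | hy2
  · obtain rfl : y = 1 := by omega
    rw [pow_one] at h h'
    have hdvd : (f + 1 : ℤ) ∣ x + z - 1 := by
      refine ⟨A - B, ?_⟩
      refine mul_left_cancel₀ hD.ne' ?_
      linear_combination hA - hB - h'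
    have hzo : Odd z := by
      by_contra hze
      rw [Nat.not_odd_iff_even] at hze
      have : (2 : ℤ) ∣ x + z - 1 := by
        refine Dvd.dvd.trans ?_ hdvd
        exact_mod_cast hodd.add_one.two_dvd
      obtain ⟨a, rfl⟩ := hxe
      obtain ⟨b, rfl⟩ := hze
      omega
    rcases Nat.lt_or_ge f 47 with hf47 | hf47
    · exact no_solution_one_small hf hf47 hodd hxe hx.ne' hzo h
    · have hz1 : z ≠ 1 := by
        rintro rfl
        have := Nat.le_self_pow hx.ne' f
        rw [pow_one] at h
        omega
      refine no_solution_one_large hf47 hzo hz1 ?_ h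
      by_contra! hxz
      obtain ⟨w, rfl⟩ : ∃ w, z = w + 1 := ⟨z - 1, by omega⟩
      have h1 : f ^ x ≤ f ^ w := Nat.pow_le_pow_right (by omega) (by omega)
      have h2 : f ^ w ≤ (f + 2) ^ w := Nat.pow_le_pow_left (by omega) w
      have h3 : 1 < (f + 2) ^ w := Nat.one_lt_pow (by omega) (by omega)
      rw [pow_succ] at h
      nlinarith
  · obtain ⟨w, rfl⟩ : ∃ w, y = w + 2 := ⟨y - 2, by omega⟩
    have hdvd : (f + 1 : ℤ) ∣ x + z := by
      refine ⟨A - B + (f + 1) ^ w, ?_⟩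
      refine mul_left_cancel₀ hD.ne' ?_
      rw [pow_add] at h'
      linear_combination hA - hB - h'
    have hze : Even z := by
      by_contra hzo
      rw [Nat.not_even_iff_odd] at hzo
      have : (2 : ℤ) ∣ x + z := by
        refine Dvd.dvd.trans ?_ hdvd
        exact_mod_cast hodd.add_one.two_dvd
      obtain ⟨a, rfl⟩ := hxe
      obtain ⟨b, rfl⟩ := hzo
      omega
    obtain ⟨c, rfl⟩ := hodd
    obtain ⟨X, rfl⟩ := hxe.two_dvd
    obtain ⟨Z, rfl⟩ := hze.two_dvd
    exact no_solution_even (m := c + 1) (X := X) (Z := Z) (y := w) (by omega) h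
end
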